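/- arXiv:2202.06195 — 3 statements merged into one kernel-verified Lean document; each statement's English description precedes it below -/
import Mathlib

section
/- We have ∑_{n=0}^∞ 1 / (binom(2n, n) · (2n+1)²) = 4 · Im( Li_{1,1}(−1/√3, i) − Li_{1,1}(1/√3, −i) ) − π · log(2 + √3) + 4G, where Li_{1,1}(x, y) = ∑_{m > n ≥ 1} x^m y^n / (m n) and G = ∑_{k=0}^∞ (−1)^k/(2k+1)² is Catalan's constant. -/
open Real Complex

/-- The double polylogarithm `Li_{1,1}(x,y) = ∑_{m > n ≥ 1} x^m y^n / (m n)`. -/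
noncomputable def Li11 (x y : ℂ) : ℂ :=
  ∑' p : {p : ℕ × ℕ // p.2 < p.1 ∧ 1 ≤ p.2},
    x ^ p.1.1 * y ^ p.1.2 / ((p.1.1 : ℂ) * (p.1.2 : ℂ))

lemma aux_maj (ρ : ℝ) (h0 : 0 ≤ ρ) (h1 : ρ < 1) : Summable (fun n : ℕ => (2 * (n:ℝ) + 2) * ρ ^ n) := by
  have h := summable_pow_mul_geometric_of_norm_lt_one (R := ℝ) 1 (r := ρ) (by rwa [Real.norm_of_nonneg h0])
  have h' := summable_geometric_of_lt_one h0 h1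
  have := (h.mul_left 2).add (h'.mul_left 2)
  refine this.congr fun n => ?_
  ring

lemma aux_bound (c : ℕ → ℝ) (p : ℕ → ℕ) (hp : ∀ n, n ≤ p n) (hc : ∀ n, |c n| ≤ 2 * n + 2)
    (ρ x : ℝ) (h1 : ρ < 1) (hx : |x| ≤ ρ) (n : ℕ) :
    ‖c n * x ^ p n‖ ≤ (2 * (n:ℝ) + 2) * ρ ^ n := by
  have h0 : 0 ≤ ρ := (abs_nonneg x).trans hx
  rw [Real.norm_eq_abs, abs_mul, abs_pow]
  have : |x| ^ p n ≤ ρ ^ n := 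
    (pow_le_pow_left₀ (abs_nonneg x) hx _).trans (pow_le_pow_of_le_one h0 h1.le (hp n))
  exact mul_le_mul (hc n) this (by positivity) (by positivity)

lemma aux_summ (c : ℕ → ℝ) (p : ℕ → ℕ) (hp : ∀ n, n ≤ p n) (hc : ∀ n, |c n| ≤ 2 * n + 2)
    (x : ℝ) (hx : |x| < 1) : Summable (fun n => c n * x ^ p n) :=
  Summable.of_norm_bounded (aux_maj |x| (abs_nonneg x) hx) 
    (fun n => aux_bound c p hp hc |x| x hx le_rfl n)

lemma aux_deriv (c : ℕ → ℝ) (p : ℕ → ℕ) (hp : ∀ n, n ≤ p n) (hc : ∀ n, |c n| ≤ 2 * n + 2)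
    (x : ℝ) (hx : |x| < 1) :
    HasDerivAt (fun z => ∑' n, c n * z ^ (p n + 1) / ((p n : ℝ) + 1)) (∑' n, c n * x ^ p n) x := by
  obtain ⟨ρ, h1, h2⟩ := exists_between hx
  have h0 : 0 < ρ := (abs_nonneg x).trans_lt h1
  refine hasDerivAt_tsum_of_isPreconnected (aux_maj ρ h0.le h2) (t := Set.Ioo (-ρ) ρ) isOpen_Ioo
    isPreconnected_Ioo (g := fun n z => c n * z ^ (p n + 1) / ((p n : ℝ) + 1))
    (g' := fun n z => c n * z ^ p n) (y₀ := 0) ?_ ?_ ⟨by linarith, h0⟩ ?_ (abs_lt.mp h1)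
  · intro n y _
    have h := ((hasDerivAt_pow (p n + 1) y).const_mul (c n)).div_const ((p n : ℝ) + 1)
    refine HasDerivAt.congr_deriv h (Eq.symm ?_)
    have : (p n : ℝ) + 1 ≠ 0 := by positivity
    push_cast
    field_simp
  · intro n y hy
    exact aux_bound c p hp hc ρ y h2 (abs_lt.mpr hy).le n
  · simp

/-! b -/
noncomputable def bb (n : ℕ) : ℝ := 4 ^ n / (Nat.choose (2 * n) n : ℝ)

lemma choose_pos' (n : ℕ) : (0:ℝ) < (Nat.choose (2 * n) n : ℝ) := by
  exact_mod_cast Nat.choose_pos (by omega)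

lemma bb_pos (n : ℕ) : 0 < bb n := div_pos (by positivity) (choose_pos' n)

lemma bb_succ (n : ℕ) : bb (n + 1) = bb n * (2 * n + 2) / (2 * n + 1) := by
  have h := Nat.succ_mul_centralBinom_succ n
  unfold Nat.centralBinom at h
  have h' : ((n:ℝ) + 1) * (Nat.choose (2 * (n+1)) (n+1) : ℝ) = 2 * (2 * n + 1) * (Nat.choose (2 * n) n : ℝ) := by
    exact_mod_cast h
  have h1 := choose_pos' n
  have h2 := choose_pos' (n+1)
  unfold bb
  have h3 : (2 * (n:ℝ) + 1) ≠ 0 := by positivity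
  field_simp
  rw [pow_succ]
  linear_combination (-2 * 4 ^ n) * h'

lemma bb_le (n : ℕ) : bb n ≤ 2 * n + 1 := by
  induction n with
  | zero => simp [bb]
  | succ k ih =>
    rw [bb_succ, div_le_iff₀ (by positivity)]
    push_cast
    have := bb_pos k
    nlinarith

noncomputable def ff (x : ℝ) : ℝ := ∑' n : ℕ, bb n * x ^ (2 * n + 1) / (((2 * n : ℕ) : ℝ) + 1)
noncomputable def FF (x : ℝ) : ℝ := 
  ∑' n : ℕ, (bb n / (2 * n + 1)) * x ^ (2 * n + 1) / (((2 * n : ℕ) : ℝ) + 1)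
noncomputable def TT (x : ℝ) : ℝ := 
  ∑' n : ℕ, ((-1) ^ n / (2 * n + 1)) * x ^ (2 * n + 1) / (((2 * n : ℕ) : ℝ) + 1)

lemma c1 (n : ℕ) : |bb n| ≤ 2 * n + 2 := by
  rw [abs_of_pos (bb_pos n)]; linarith [bb_le n]
lemma c2 (n : ℕ) : |bb n / (2 * n + 1)| ≤ 2 * n + 2 := by
  rw [abs_of_pos (div_pos (bb_pos n) (by positivity)), div_le_iff₀ (by positivity)]
  have : (0:ℝ) ≤ n := by positivity
  nlinarith [bb_le n]
lemma c3 (n : ℕ) : |(-1:ℝ) ^ n / (2 * n + 1)| ≤ 2 * n + 2 := by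
  have : (0:ℝ) ≤ n := by positivity
  rw [abs_div, abs_pow, abs_neg, abs_one, one_pow, abs_of_pos (by positivity), div_le_iff₀ (by positivity)]
  nlinarith

lemma ff_deriv (x : ℝ) (hx : |x| < 1) : HasDerivAt ff (∑' n : ℕ, bb n * x ^ (2 * n)) x :=
  aux_deriv bb (fun n => 2 * n) (fun n => by omega) c1 x hx

lemma ff_ode (x : ℝ) (hx : |x| < 1) : 
    (1 - x ^ 2) * (∑' n : ℕ, bb n * x ^ (2 * n)) = 1 + x * ff x := by
  have s1 := aux_summ bb (fun n => 2 * n) (fun n => by omega) c1 x hx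
  have s2 := aux_summ (fun n => bb n / (2 * n + 1)) (fun n => 2 * n + 1) (fun n => by omega) c2 x hx
  have e2 : ff x = ∑' n : ℕ, bb n / (2 * n + 1) * x ^ (2 * n + 1) := by
    unfold ff; congr 1; ext n; push_cast; ring
  have e3 : ∑' n : ℕ, bb n * x ^ (2 * n) = 
      1 + ∑' n : ℕ, bb (n+1) * x ^ (2 * (n + 1)) := by
    rw [s1.tsum_eq_zero_add]; simp [bb]
  have e4 : ∑' n : ℕ, bb (n+1) * x ^ (2 * (n + 1)) = 
     x * (∑' n : ℕ, bb n / (2 * n + 1) * x ^ (2 * n + 1)) + x ^ 2 * ∑' n : ℕ, bb n * x ^ (2 * n) := by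
    rw [← tsum_mul_left, ← tsum_mul_left, ← (s2.mul_left x).tsum_add (s1.mul_left (x^2))]
    congr 1; ext n
    rw [bb_succ]
    have h3 : (2 * (n:ℝ) + 1) ≠ 0 := by positivity
    field_simp
    ring
  rw [e2]; linarith

lemma ff_sin (θ : ℝ) (h0 : 0 < θ) (h1 : θ < π / 2) : ff (Real.sin θ) * Real.cos θ = θ := by
  have key : ∀ y ∈ Set.Icc 0 θ, HasDerivAt (fun t => ff (Real.sin t) * Real.cos t - t) 0 y := by
    intro y hy
    have hc : 0 < Real.cos y := Real.cos_pos_of_mem_Ioo ⟨by linarith [hy.1], by linarith [hy.2]⟩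
    have hs : |Real.sin y| < 1 := by
      rw [← sq_lt_one_iff_abs_lt_one]; nlinarith [Real.sin_sq_add_cos_sq y]
    have h := (((ff_deriv _ hs).comp y (Real.hasDerivAt_sin y)).mul (Real.hasDerivAt_cos y)).sub (hasDerivAt_id y)
    refine HasDerivAt.congr_deriv h (Eq.symm ?_)
    have := ff_ode _ hs
    rw [← Real.cos_sq'] at this
    simp only [Function.comp]
    linarith
  have := constant_of_has_deriv_right_zero (f := fun t => ff (Real.sin t) * Real.cos t - t) (a := 0) (b := θ)
    (fun y hy => (key y hy).continuousAt.continuousWithinAt) 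
    (fun y hy => (key y ⟨hy.1, hy.2.le⟩).hasDerivWithinAt) θ ⟨h0.le, le_rfl⟩
  simp [ff] at this
  simp [ff]
  linarith

lemma FF_deriv (x : ℝ) (hx : |x| < 1) (h0 : x ≠ 0) : HasDerivAt FF (ff x / x) x := by
  have := aux_deriv (fun n => bb n / (2 * n + 1)) (fun n => 2 * n) (fun n => by omega) c2 x hx
  refine HasDerivAt.congr_deriv this (Eq.symm ?_)
  unfold ff
  rw [← tsum_div_const]
  congr 1; ext n
  push_cast
  field_simp
  ring
lemma FF_cont (x : ℝ) (hx : |x| < 1) : ContinuousAt FF x := 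
  (aux_deriv (fun n => bb n / (2 * n + 1)) (fun n => 2 * n) (fun n => by omega) c2 x hx).continuousAt

lemma TT_deriv (x : ℝ) (hx : |x| < 1) (h0 : x ≠ 0) : HasDerivAt TT (Real.arctan x / x) x := by
  have := aux_deriv (fun n => (-1) ^ n / (2 * n + 1)) (fun n => 2 * n) (fun n => by omega) c3 x hx
  refine HasDerivAt.congr_deriv this (Eq.symm ?_)
  rw [← (Real.hasSum_arctan (x := x) (by simpa using hx)).tsum_eq, ← tsum_div_const]
  congr 1; ext n
  push_cast
  field_simp
  ring

lemma TT_cont : ContinuousOn TT (Set.Icc (-1) 1) := by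
  unfold TT
  refine continuousOn_tsum (u := fun n : ℕ => 1 / ((n:ℝ) + 1) ^ 2) ?_ ?_ ?_
  · intro n; fun_prop
  · have := (summable_nat_add_iff (f := fun n : ℕ => 1 / (n:ℝ) ^ 2) 1).mpr (by simp)
    simpa using this
  · intro n x hx
    have hx' : |x| ≤ 1 := abs_le.mpr hx
    rw [Real.norm_eq_abs, abs_div, abs_mul, abs_div, abs_pow, abs_pow, abs_neg, abs_one, one_pow]
    have h1 : |x| ^ (2 * n + 1) ≤ 1 := pow_le_one₀ (abs_nonneg x) hx'
    have h2 : |(2 * (n:ℝ) + 1)| = 2 * n + 1 := abs_of_pos (by positivity)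
    push_cast
    rw [h2, div_mul_eq_mul_div, div_div, one_mul]
    apply div_le_div₀ (by norm_num) h1 (by positivity)
    have : (0:ℝ) ≤ n := by positivity
    nlinarith

lemma partA : FF (1/2) = 2 * TT (2 - √3) := by
  have hpi := Real.pi_pos
  have hs3 : √3 ^ 2 = 3 := Real.sq_sqrt (by norm_num)
  have key : ∀ y ∈ Set.Icc 0 (π/6), |Real.sin y| < 1 ∧ |Real.tan (y/2)| < 1 ∧ 0 < Real.cos (y/2) := by
    intro y hy
    have hc : 0 < Real.cos y := Real.cos_pos_of_mem_Ioo ⟨by linarith [hy.1], by linarith [hy.2]⟩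
    have hc2 : 0 < Real.cos (y/2) := Real.cos_pos_of_mem_Ioo ⟨by linarith [hy.1], by linarith [hy.2]⟩
    refine ⟨?_, ?_, hc2⟩
    · rw [← sq_lt_one_iff_abs_lt_one]; nlinarith [Real.sin_sq_add_cos_sq y]
    · rw [← sq_lt_one_iff_abs_lt_one, Real.tan_eq_sin_div_cos, div_pow, div_lt_one (by positivity)]
      have : Real.cos y = Real.cos (2 * (y/2)) := by ring_nf
      rw [Real.cos_two_mul'] at this
      linarith
  have kc : ContinuousOn (fun t => FF (Real.sin t) - 2 * TT (Real.tan (t/2))) (Set.Icc 0 (π/6)) := by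
    intro y hy
    obtain ⟨k1, k2, k3⟩ := key y hy
    apply ContinuousAt.continuousWithinAt
    refine ContinuousAt.sub ((FF_cont _ k1).comp Real.continuous_sin.continuousAt) (continuousAt_const.mul ?_)
    have : ContinuousAt TT (Real.tan (y/2)) := TT_cont.continuousAt (Icc_mem_nhds (abs_lt.mp k2).1 (abs_lt.mp k2).2)
    refine ContinuousAt.comp (f := fun t => Real.tan (t/2)) this ?_
    exact ContinuousAt.comp (f := fun t : ℝ => t/2) (Real.continuousAt_tan.mpr k3.ne') (by fun_prop)
  have kd : ∀ y ∈ Set.Ioo 0 (π/6), HasDerivAt (fun t => FF (Real.sin t) - 2 * TT (Real.tan (t/2))) 0 y := by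
    intro y hy
    obtain ⟨k1, k2, k3⟩ := key y ⟨hy.1.le, hy.2.le⟩
    have hs : 0 < Real.sin y := Real.sin_pos_of_pos_of_lt_pi hy.1 (by linarith [hy.2])
    have hs2 : 0 < Real.sin (y/2) := Real.sin_pos_of_pos_of_lt_pi (by linarith [hy.1]) (by linarith [hy.2])
    have ht : Real.tan (y/2) ≠ 0 := by rw [Real.tan_eq_sin_div_cos]; positivity
    have d1 := (FF_deriv _ k1 hs.ne').comp y (Real.hasDerivAt_sin y)
    have d2 := (TT_deriv _ k2 ht).comp y ((Real.hasDerivAt_tan k3.ne').comp y ((hasDerivAt_id y).div_const 2))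
    have := d1.sub (d2.const_mul 2)
    refine HasDerivAt.congr_deriv this (Eq.symm ?_)
    have e := ff_sin y hy.1 (by linarith [hy.2])
    rw [Real.arctan_tan (by linarith [hy.1]) (by linarith [hy.2]), div_mul_eq_mul_div, e,
      Real.tan_eq_sin_div_cos]
    have : Real.sin y = 2 * Real.sin (y/2) * Real.cos (y/2) := by
      rw [← Real.sin_two_mul]; ring_nf
    rw [this]
    field_simp
    ring
  have hlt : (0:ℝ) < π / 6 := by positivity
  obtain ⟨c, hc, hc'⟩ := exists_hasDerivAt_eq_slope _ (fun _ => 0) hlt kc kd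
  have e1 : Real.tan (π/6/2) = 2 - √3 := by
    have a1 : Real.sin (π/6) = 2 * Real.sin (π/6/2) * Real.cos (π/6/2) := by
      rw [← Real.sin_two_mul]; ring_nf
    have a2 : Real.cos (π/6) = 2 * Real.cos (π/6/2) ^ 2 - 1 := by
      rw [← Real.cos_two_mul]; ring_nf
    rw [Real.sin_pi_div_six] at a1
    rw [Real.cos_pi_div_six] at a2
    have k3 := (key (π/6) ⟨hlt.le, le_rfl⟩).2.2
    rw [Real.tan_eq_sin_div_cos, div_eq_iff k3.ne']
    apply mul_left_cancel₀ k3.ne'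
    linear_combination (-1/2) * a1 + (2 - √3) / 2 * a2 + (1/4) * hs3
  rw [eq_div_iff (by linarith), Real.sin_pi_div_six, e1] at hc'
  simp only [Real.sin_zero, zero_div, Real.tan_zero] at hc'
  have f0 : FF 0 = 0 := by simp [FF]
  have t0 : TT 0 = 0 := by simp [TT]
  rw [f0, t0] at hc'
  linarith

lemma lhs_eq : (∑' n : ℕ, 1 / ((Nat.choose (2 * n) n : ℝ) * (2 * (n : ℝ) + 1) ^ 2)) = 4 * TT (2 - √3) := by
  have : (∑' n : ℕ, 1 / ((Nat.choose (2 * n) n : ℝ) * (2 * (n : ℝ) + 1) ^ 2)) = 2 * FF (1/2) := by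
    unfold FF
    rw [← tsum_mul_left]
    congr 1; ext n
    have h1 := choose_pos' n
    unfold bb
    push_cast
    have : (1/2:ℝ) ^ (2 * n + 1) = 1 / (4 ^ n * 2) := by
      rw [pow_succ, pow_mul, one_div, one_div, inv_pow, inv_pow]; norm_num [mul_comm]
    rw [this]
    field_simp
  rw [this, partA]; ring

/-! part B -/
noncomputable def aa (n : ℕ) : ℝ := ∑ k ∈ Finset.range n, (-1 : ℝ) ^ k / (2 * k + 1)
noncomputable def KK (x : ℝ) : ℝ := 
  ∑' n : ℕ, (2 * aa (n + 1)) * x ^ (2 * n + 1 + 1) / (((2 * n + 1 : ℕ) : ℝ) + 1)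

lemma aa_le (n : ℕ) : |aa n| ≤ n := by
  unfold aa
  refine (Finset.abs_sum_le_sum_abs _ _).trans ?_
  refine (Finset.sum_le_card_nsmul _ _ 1 ?_).trans (by simp)
  intro k _
  rw [abs_div, abs_pow, abs_neg, abs_one, one_pow, abs_of_pos (by positivity), div_le_iff₀ (by positivity)]
  have : (0:ℝ) ≤ k := by positivity
  linarith

lemma c4 (n : ℕ) : |2 * aa (n + 1)| ≤ 2 * n + 2 := by
  rw [abs_mul, abs_two]; have := aa_le (n+1); push_cast at this; linarith

lemma KK_deriv (x : ℝ) (hx : |x| < 1) : HasDerivAt KK (2 * Real.arctan x / (1 - x ^ 2)) x := by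
  have := aux_deriv (fun n => 2 * aa (n + 1)) (fun n => 2 * n + 1) (fun n => by omega) c4 x hx
  refine HasDerivAt.congr_deriv this (Eq.symm ?_)
  have s1 := aux_summ (fun n => 2 * aa (n + 1)) (fun n => 2 * n + 1) (fun n => by omega) c4 x hx
  have hx2 : 1 - x ^ 2 ≠ 0 := by
    have := (sq_lt_one_iff_abs_lt_one x).mpr hx
    linarith
  have c5 : ∀ n : ℕ, |2 * aa n| ≤ 2 * n + 2 := fun n => by
    rw [abs_mul, abs_two]; have := aa_le n; linarith
  have s2 := aux_summ (fun n => 2 * aa n) (fun n => 2 * n + 1) (fun n => by omega) c5 x hx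
  have e2 : ∑' n : ℕ, 2 * aa n * x ^ (2 * n + 1) = x ^ 2 * ∑' n : ℕ, 2 * aa (n + 1) * x ^ (2 * n + 1) := by
    rw [s2.tsum_eq_zero_add, ← tsum_mul_left]
    simp only [aa, Finset.range_zero, Finset.sum_empty, mul_zero, zero_mul, zero_add]
    congr 1; ext n; ring
  have e3 : 2 * Real.arctan x = ∑' n : ℕ, 2 * aa (n + 1) * x ^ (2 * n + 1) - ∑' n : ℕ, 2 * aa n * x ^ (2 * n + 1) := by
    rw [← (Real.hasSum_arctan (x := x) (by simpa using hx)).tsum_eq, ← tsum_mul_left, ← s1.tsum_sub s2]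
    congr 1; ext n
    simp only [aa, Finset.sum_range_succ]
    push_cast
    ring
  rw [div_eq_iff hx2, e3, e2]
  ring

lemma partB : KK (1/√3) = TT (2 - √3) - TT 1 + π/4 * Real.log (2 + √3) := by
  have hs3 : √3 ^ 2 = 3 := Real.sq_sqrt (by norm_num)
  have hs0 : 0 < √3 := by positivity
  have hs1 : 1 < √3 := by nlinarith
  have hlt : 0 < 1/√3 := by positivity
  have hr1 : 1/√3 < 1 := by rw [div_lt_one hs0]; exact hs1
  let H : ℝ → ℝ := fun z => KK z - TT ((1 - z)/(1 + z)) + π/4 * Real.log ((1-z)/(1+z))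
  have kc : ContinuousOn H (Set.Icc 0 (1/√3)) := by
    have a1 : ContinuousOn (fun z : ℝ => (1-z)/(1+z)) (Set.Icc 0 (1/√3)) := by
      apply ContinuousOn.div (by fun_prop) (by fun_prop)
      intro x hx; linarith [hx.1]
    refine ContinuousOn.add (ContinuousOn.sub ?_ ?_) (continuousOn_const.mul (a1.log ?_))
    · intro z hz
      exact (KK_deriv z (abs_lt.mpr ⟨by linarith [hz.1], by linarith [hz.2]⟩)).continuousAt.continuousWithinAt
    · refine TT_cont.comp a1 ?_
      intro z hz
      have : 0 < 1 + z := by linarith [hz.1]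
      constructor
      · rw [le_div_iff₀ this]; linarith
      · rw [div_le_iff₀ this]; linarith [hz.1]
    · intro z hz
      have : 0 < 1 + z := by linarith [hz.1]
      have : 0 < 1 - z := by linarith [hz.2]
      positivity
  have kd : ∀ z ∈ Set.Ioo 0 (1/√3), HasDerivAt H 0 z := by
    intro z hz
    have p0 := hz.1
    have p1 : 0 < 1 + z := by linarith [hz.1]
    have p2 : 0 < 1 - z := by linarith [hz.2]
    have pu : 0 < (1-z)/(1+z) := by positivity
    have pu1 : |(1-z)/(1+z)| < 1 := by
      rw [abs_of_pos pu, div_lt_one p1]; linarith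
    have du : HasDerivAt (fun z : ℝ => (1-z)/(1+z)) (-2/(1+z)^2) z := by
      have := ((hasDerivAt_id z).const_sub 1).div ((hasDerivAt_id z).const_add 1) p1.ne'
      refine HasDerivAt.congr_deriv this (Eq.symm ?_)
      simp only [id]; ring
    have d1 := KK_deriv z (abs_lt.mpr ⟨by linarith, by linarith⟩)
    have d2 := (TT_deriv _ pu1 pu.ne').comp z du
    have d3 := (du.log pu.ne').const_mul (π/4)
    have := (d1.sub d2).add d3
    refine HasDerivAt.congr_deriv this (Eq.symm ?_)
    have ea : Real.arctan ((1-z)/(1+z)) = π/4 - Real.arctan z := by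
      have h := Real.arctan_add (x := (1-z)/(1+z)) (y := z) (by rw [div_mul_eq_mul_div, div_lt_one p1]; nlinarith)
      have e : ((1-z)/(1+z) + z) / (1 - (1-z)/(1+z) * z) = 1 := by
        rw [div_eq_one_iff_eq]
        · field_simp; ring
        · have : (1-z)/(1+z) * z < 1 := by rw [div_mul_eq_mul_div, div_lt_one p1]; nlinarith
          linarith
      rw [e, Real.arctan_one] at h
      linarith
    rw [ea]
    have : 1 - z ^ 2 = (1 - z) * (1 + z) := by ring
    rw [this]
    field_simp
    ring
  obtain ⟨c, hc, hc'⟩ := exists_hasDerivAt_eq_slope H (fun _ => 0) hlt kc kd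
  rw [eq_div_iff (by linarith)] at hc'
  have e1 : (1 - 1/√3)/(1 + 1/√3) = 2 - √3 := by
    rw [div_eq_iff (by positivity)]
    field_simp
    linear_combination hs3
  have e2 : 2 - √3 = (2 + √3)⁻¹ := by
    apply eq_inv_of_mul_eq_one_left; linear_combination -hs3
  have k0 : KK 0 = 0 := by simp [KK]
  simp only [H] at hc'
  rw [e1, k0] at hc'
  nth_rw 2 [e2] at hc'
  rw [Real.log_inv] at hc'
  simp at hc'
  simp
  linarith

/-! part C -/
lemma Li_eq (x y : ℂ) (hx : ‖x‖ < 1) (hy : ‖y‖ ≤ 1) : 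
    HasSum (fun N : ℕ => x ^ (N + 2) / (N + 2) * ∑ l ∈ Finset.range (N + 1), y ^ (l + 1) / (l + 1)) 
     (∑' p : {p : ℕ × ℕ // p.2 < p.1 ∧ 1 ≤ p.2},
    x ^ p.1.1 * y ^ p.1.2 / ((p.1.1 : ℂ) * (p.1.2 : ℂ))) := by
  let e : ℕ × ℕ ≃ {p : ℕ × ℕ // p.2 < p.1 ∧ 1 ≤ p.2} :=
    { toFun := fun q => ⟨(q.1 + q.2 + 2, q.1 + 1), by simp⟩
      invFun := fun p => (p.1.2 - 1, p.1.1 - p.1.2 - 1)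
      left_inv := fun q => by ext <;> simp; omega
      right_inv := fun ⟨p, h1, h2⟩ => by
        ext
        · simp; omega
        · simp; omega }
  let g : ℕ × ℕ → ℂ := fun q => x ^ (q.1 + q.2 + 2) * y ^ (q.1 + 1) / (((q.1 + q.2 + 2 : ℕ) : ℂ) * ((q.1 + 1 : ℕ) : ℂ))
  have hs : Summable g := by
    have hg := summable_geometric_of_lt_one (norm_nonneg x) hx
    have h2 := hg.mul_of_nonneg hg (fun _ => by positivity) (fun _ => by positivity)
    refine Summable.of_norm_bounded h2 fun q => ?_
    simp only [g]
    rw [norm_div, norm_mul, norm_mul, norm_pow, norm_pow, Complex.norm_natCast, Complex.norm_natCast, ← pow_add]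
    have b1 : ‖x‖ ^ (q.1 + q.2 + 2) ≤ ‖x‖ ^ (q.1 + q.2) := 
      pow_le_pow_of_le_one (norm_nonneg x) hx.le (by omega)
    have b2 : ‖y‖ ^ (q.1 + 1) ≤ 1 := pow_le_one₀ (norm_nonneg y) hy
    have b3 : (1:ℝ) ≤ ((q.1 + q.2 + 2 : ℕ) : ℝ) * ((q.1 + 1 : ℕ) : ℝ) := by
      exact_mod_cast Nat.one_le_iff_ne_zero.mpr (by positivity)
    rw [div_le_iff₀ (by positivity)]
    calc ‖x‖ ^ (q.1 + q.2 + 2) * ‖y‖ ^ (q.1 + 1) ≤ ‖x‖ ^ (q.1 + q.2) * 1 := by gcongr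
      _ ≤ _ := by gcongr
  rw [← e.tsum_eq]
  have h1 : HasSum g (∑' q, g q) := hs.hasSum
  have h2 := (Finset.HasAntidiagonal.sigmaAntidiagonalEquivProd (A := ℕ)).hasSum_iff.mpr h1
  have h3 := h2.sigma (g := fun N : ℕ => x ^ (N + 2) / (N + 2) * ∑ l ∈ Finset.range (N + 1), y ^ (l + 1) / (l + 1)) ?_
  · exact h3
  · intro N
    have := hasSum_fintype (fun c : Finset.HasAntidiagonal.antidiagonal N => g c.1)
    convert this using 1
    · rfl
    rw [Finset.sum_coe_sort (Finset.HasAntidiagonal.antidiagonal N) g, 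
      Finset.Nat.sum_antidiagonal_eq_sum_range_succ_mk, Finset.mul_sum]
    refine Finset.sum_congr rfl fun l hl => ?_
    have : l + (N - l) = N := by have := Finset.mem_range.mp hl; omega
    simp only [g, this]
    push_cast
    rw [div_mul_div_comm]

lemma im_odd (n : ℕ) : (Complex.I ^ (2 * n + 1)).im = (-1) ^ n := by
  rw [pow_succ, pow_mul, Complex.I_sq]
  have : ((-1 : ℂ) ^ n) = (((-1 : ℝ) ^ n : ℝ) : ℂ) := by push_cast; rfl
  rw [this, Complex.im_ofReal_mul]; simp

lemma im_even (n : ℕ) : (Complex.I ^ (2 * n)).im = 0 := by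
  rw [pow_mul, Complex.I_sq]
  have : ((-1 : ℂ) ^ n) = (((-1 : ℝ) ^ n : ℝ) : ℂ) := by push_cast; rfl
  rw [this, Complex.ofReal_im]

lemma im_neg (n : ℕ) : ((-Complex.I) ^ n).im = - (Complex.I ^ n).im := by
  rw [← Complex.conj_I, ← map_pow, Complex.conj_im]

noncomputable def AA (N : ℕ) : ℝ := ∑ l ∈ Finset.range (N + 1), (Complex.I ^ (l + 1)).im / (l + 1)

lemma AA_even (n : ℕ) : AA (2 * n) = aa (n + 1) := by
  induction n with
  | zero => simp [AA, aa]
  | succ k ih =>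
    unfold AA at ih ⊢
    have : 2 * (k + 1) + 1 = 2 * k + 1 + 1 + 1 := by ring
    rw [this, Finset.sum_range_succ, Finset.sum_range_succ, ih, aa, aa, Finset.sum_range_succ _ (k+1)]
    have e1 : 2 * k + 1 + 1 = 2 * (k + 1) := by ring
    rw [e1, im_even, im_odd]
    push_cast
    ring

lemma im_term (r : ℝ) (y : ℂ) (N : ℕ) :
    ((r : ℂ) ^ (N + 2) / (N + 2) * ∑ l ∈ Finset.range (N + 1), y ^ (l + 1) / (l + 1)).im
    = r ^ (N + 2) / (N + 2) * ∑ l ∈ Finset.range (N + 1), (y ^ (l + 1)).im / (l + 1) := by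
  have : (r : ℂ) ^ (N + 2) / (N + 2) = ((r ^ (N + 2) / (N + 2) : ℝ) : ℂ) := by push_cast; rfl
  rw [this, Complex.im_ofReal_mul, Complex.im_sum]
  congr 1
  refine Finset.sum_congr rfl fun l _ => ?_
  have : (l : ℂ) + 1 = ((l + 1 : ℝ) : ℂ) := by push_cast; rfl
  rw [this, Complex.div_ofReal_im]

lemma partC (r : ℝ) (hr : |r| < 1) :
    (Li11 ((-r : ℝ) : ℂ) Complex.I - Li11 (r : ℂ) (-Complex.I)).im = KK r := by
  have h1 := Li_eq ((-r : ℝ) : ℂ) Complex.I (by simpa using hr) (by simp)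
  have h2 := Li_eq (r : ℂ) (-Complex.I) (by simpa using hr) (by simp)
  have h := Complex.imCLM.hasSum (h1.sub h2)
  have inj : Function.Injective (fun n : ℕ => 2 * n) := fun a b h => by simpa using h
  have ht : ∀ N : ℕ, (((-r : ℝ) : ℂ) ^ (N + 2) / (N + 2) * ∑ l ∈ Finset.range (N + 1), Complex.I ^ (l + 1) / (l + 1)
      - (r : ℂ) ^ (N + 2) / (N + 2) * ∑ l ∈ Finset.range (N + 1), (-Complex.I) ^ (l + 1) / (l + 1)).im
      = ((-1) ^ N + 1) * r ^ (N + 2) / (N + 2) * AA N := by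
    intro N
    rw [Complex.sub_im, im_term, im_term]
    simp only [im_neg, neg_div, Finset.sum_neg_distrib]
    rw [← AA, neg_pow r]
    ring
  have h' := (inj.hasSum_iff ?_).mpr h
  · unfold KK
    refine (h'.tsum_eq.symm.trans ?_)
    congr 1; ext n
    simp only [Function.comp, Complex.imCLM_apply]
    rw [ht, AA_even, pow_mul]
    push_cast
    norm_num
    ring
  · intro N hN
    simp only [Function.comp, Complex.imCLM_apply]
    rw [ht]
    have : Odd N := by
      rw [← Nat.not_even_iff_odd]
      rintro ⟨k, hk⟩
      exact hN ⟨k, by simp; omega⟩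
    rw [this.neg_one_pow]; simp

theorem stmt10 :
    (∑' n : ℕ, 1 / ((Nat.choose (2 * n) n : ℝ) * (2 * (n : ℝ) + 1) ^ 2)) =
    4 * (Li11 ((-1 / Real.sqrt 3 : ℝ) : ℂ) Complex.I -
         Li11 ((1 / Real.sqrt 3 : ℝ) : ℂ) (-Complex.I)).im -
      π * Real.log (2 + Real.sqrt 3) +
      4 * ∑' k : ℕ, (-1 : ℝ) ^ k / (2 * (k : ℝ) + 1) ^ 2 := by
  have hG : ∑' k : ℕ, (-1 : ℝ) ^ k / (2 * (k : ℝ) + 1) ^ 2 = TT 1 := by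
    unfold TT
    congr 1; ext n
    push_cast
    rw [one_pow, mul_one, div_div, sq]
  have hr : |1 / √3| < 1 := by
    have hs3 : √3 ^ 2 = 3 := Real.sq_sqrt (by norm_num)
    have hs0 : 0 < √3 := by positivity
    rw [abs_of_pos (by positivity), div_lt_one hs0]
    nlinarith
  rw [lhs_eq, hG, neg_div, partC _ hr, partB]
  ring
end

section
/- We have ∑_{n₁ > n₂ ≥ 0} 4^{n₁} / (binom(2n₁, n₁) · n₁² · (2n₂+1)) = 7 ζ(3), where ζ(3) = ∑_{n=1}^∞ 1/n³ and the double sum is over integers n₁ > n₂ ≥ 0. -/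
open Real

namespace Aux11
open MeasureTheory Set Filter Topology

lemma cosh_bound (u : ℝ) : 1 / cosh u ≤ 2 * exp (-u) := by
  rw [div_le_iff₀ (cosh_pos u), cosh_eq]
  have h : exp (-u) * exp u = 1 := by rw [← exp_add]; simp
  nlinarith [sq_nonneg (exp (-u))]

lemma abs_g_le (n : ℕ) (u : ℝ) : |tanh u ^ n / cosh u| ≤ 2 * exp (-u) := by
  refine le_trans ?_ (cosh_bound u)
  rw [abs_div, abs_of_pos (cosh_pos u), abs_pow]
  have := cosh_pos u
  gcongr
  exact pow_le_one₀ (abs_nonneg _) (abs_tanh_lt_one u).le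

lemma deriv_tanh (u : ℝ) : HasDerivAt tanh (1 / cosh u ^ 2) u := by
  have h := (hasDerivAt_sinh u).div (hasDerivAt_cosh u) (cosh_pos u).ne'
  have e : tanh = sinh / cosh := by ext x; simp [tanh_eq_sinh_div_cosh]
  rw [e]
  convert! h using 1
  congr 1
  have := cosh_sq u
  nlinarith

lemma cont_g (n : ℕ) : Continuous (fun u : ℝ => tanh u ^ n / cosh u) := by
  have : Continuous tanh := continuous_iff_continuousAt.2 fun x => (deriv_tanh x).continuousAt
  exact (this.pow n).div continuous_cosh (fun u => (cosh_pos u).ne')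

lemma int_g (n : ℕ) : IntegrableOn (fun u : ℝ => tanh u ^ n / cosh u) (Ioi 0) := by
  have h : IntegrableOn (fun u : ℝ => 2 * exp (-u)) (Ioi 0) := by
    have := (exp_neg_integrableOn_Ioi 0 (one_pos)).const_mul 2
    simpa [IntegrableOn] using this
  refine Integrable.mono' h (cont_g n).aestronglyMeasurable ?_
  exact ae_of_all _ (fun u => abs_g_le n u)

lemma tendsto_g (n : ℕ) : Tendsto (fun u : ℝ => tanh u ^ n / cosh u) atTop (𝓝 0) := by
  refine squeeze_zero_norm (fun u => abs_g_le n u) ?_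
  have := (tendsto_exp_neg_atTop_nhds_zero).const_mul 2
  simpa using this

lemma deriv_g (n : ℕ) (u : ℝ) : HasDerivAt (fun u : ℝ => tanh u ^ n / cosh u)
    (n * (tanh u ^ (n-1) / cosh u) - (n + 1) * (tanh u ^ (n+1) / cosh u)) u := by
  have h := ((deriv_tanh u).pow n).div (hasDerivAt_cosh u) (cosh_pos u).ne'
  convert! h using 1
  have hc := (cosh_pos u).ne'
  have hs : sinh u = tanh u * cosh u := by rw [tanh_eq_sinh_div_cosh]; field_simp
  have h2 := cosh_sq u
  rw [hs] at h2 ⊢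
  have h3 : 1 / cosh u ^ 2 = 1 - tanh u ^ 2 := by
    field_simp; nlinarith
  simp only [Pi.pow_apply]
  rw [h3]
  rcases n with _ | n
  · simp; field_simp
  · simp only [Nat.add_sub_cancel]
    field_simp
    push_cast
    ring

lemma rec_g (n : ℕ) (hn : n ≠ 0) :
    (n + 1) * ∫ u in Ioi (0:ℝ), tanh u ^ (n+1) / cosh u = 
    n * ∫ u in Ioi (0:ℝ), tanh u ^ (n-1) / cosh u := by
  have h := integral_Ioi_of_hasDerivAt_of_tendsto' (a := 0) (fun x _ => deriv_g n x)
    (((int_g (n-1)).const_mul _).sub ((int_g (n+1)).const_mul _)) (tendsto_g n)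
  rw [integral_sub ((int_g (n-1)).const_mul _) ((int_g (n+1)).const_mul _),
    integral_const_mul, integral_const_mul] at h
  simp [hn] at h
  linarith

lemma base_g : ∫ u in Ioi (0:ℝ), tanh u ^ 1 / cosh u = 1 := by
  have h := integral_Ioi_of_hasDerivAt_of_tendsto' (a := 0) (fun x _ => deriv_g 0 x)
    (((int_g (0-1)).const_mul _).sub ((int_g (0+1)).const_mul _)) (tendsto_g 0)
  simp [integral_neg] at h
  simpa using h

lemma val_g (n : ℕ) : ∫ u in Ioi (0:ℝ), tanh u ^ (2*n+1) / cosh u =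
    (4:ℝ)^(n+1) / ((Nat.choose (2*(n+1)) (n+1) : ℝ) * (2 * (n+1))) := by
  induction n with
  | zero => rw [show 2*0+1 = 1 from rfl, base_g]; norm_num
  | succ n ih =>
    have h := rec_g (2*n+2) (by omega)
    rw [show 2*n+2-1 = 2*n+1 by omega, ih] at h
    have hc := Nat.succ_mul_centralBinom_succ (n+1)
    rw [Nat.centralBinom, Nat.centralBinom] at hc
    have hc' : ((n:ℝ)+1+1) * (Nat.choose (2*(n+1+1)) (n+1+1) : ℝ) = 
      2 * (2*(n+1)+1) * (Nat.choose (2*(n+1)) (n+1) : ℝ) := by exact_mod_cast hc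
    have p1 : (0:ℝ) < Nat.choose (2*(n+1)) (n+1) := by
      exact_mod_cast Nat.choose_pos (by omega)
    have p2 : (0:ℝ) < Nat.choose (2*(n+1+1)) (n+1+1) := by
      exact_mod_cast Nat.choose_pos (by omega)
    rw [show 2*(n+1)+1 = 2*n+2+1 by ring]
    set A := ∫ u in Ioi (0:ℝ), tanh u ^ (2*n+2+1) / cosh u
    push_cast at h ⊢
    rw [eq_div_iff (by positivity)]
    have e : A * (((2 * (n + 1 + 1)).choose (n + 1 + 1) : ℝ) * (2 * (n + 1 + 1))) =
      4 * ((2*n+2+1) * A) * ((2 * (n + 1)).choose (n + 1) : ℝ) := by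
      linear_combination 2 * A * hc'
    rw [e, h]
    field_simp
    ring

/-- series for `u^2` -/
lemma sq_series (u : ℝ) (hu : 0 < u) :
    HasSum (fun p : ℕ × ℕ => tanh u ^ (2*(p.1+p.2)+2) / ((2*p.1+1)*(2*p.2+1))) (u^2) := by
  have t0 : 0 < tanh u := by
    rw [tanh_eq_sinh_div_cosh]; exact div_pos (sinh_pos_iff.2 hu) (cosh_pos u)
  have h := hasSum_log_sub_log_of_abs_lt_one (abs_tanh_lt_one u)
  have hu' : log (1 + tanh u) - log (1 - tanh u) = 2 * u := by
    have h1 := artanh_tanh u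
    rw [artanh_eq_half_log ⟨(neg_one_lt_tanh u).le, (tanh_lt_one u).le⟩,
      log_div (by linarith [neg_one_lt_tanh u]) (by linarith [tanh_lt_one u])] at h1
    linarith
  rw [hu'] at h
  have h2 : HasSum (fun k : ℕ => tanh u ^ (2*k+1) / (2*(k:ℝ)+1)) u := by
    have := h.mul_left (1/2)
    convert! this using 1
    · ext k; ring
    · ring
  have nn : 0 ≤ (fun k : ℕ => tanh u ^ (2*k+1) / (2*(k:ℝ)+1)) := fun k => by
    simp only [Pi.zero_apply]; positivity
  have h3 := h2.mul h2 (h2.summable.mul_of_nonneg h2.summable nn nn)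
  convert! h3 using 1
  · ext p
    rw [div_mul_div_comm]
    congr 1
    ring
  · ring

lemma key_pt (u : ℝ) (hu : 0 < u) :
    ENNReal.ofReal (2 * u^2 / sinh u) = ∑' p : ℕ × ℕ, ENNReal.ofReal
      (2 / ((p.1+p.2+1)*(2*p.2+1)) * (tanh u ^ (2*(p.1+p.2)+1) / cosh u)) := by
  have t0 : 0 < tanh u := by
    rw [tanh_eq_sinh_div_cosh]; exact div_pos (sinh_pos_iff.2 hu) (cosh_pos u)
  have c0 := cosh_pos u
  have s0 := sinh_pos_iff.2 hu
  have hs : sinh u = tanh u * cosh u := by rw [tanh_eq_sinh_div_cosh]; field_simp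
  have h := (sq_series u hu).mul_left (2 / sinh u)
  have e1 : ENNReal.ofReal (2 * u^2 / sinh u) = ∑' p : ℕ × ℕ, ENNReal.ofReal
      (2 / sinh u * (tanh u ^ (2*(p.1+p.2)+2) / ((2*p.1+1)*(2*p.2+1)))) := by
    rw [← ENNReal.ofReal_tsum_of_nonneg _ h.summable, h.tsum_eq]
    · congr 1; ring
    · intro p; positivity
  set F : ℕ × ℕ → ENNReal := fun p => ENNReal.ofReal
      (1 / ((p.1+p.2+1)*(2*p.2+1)) * (tanh u ^ (2*(p.1+p.2)+1) / cosh u)) with hF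
  have e2 : ∑' p : ℕ × ℕ, F p.swap = ∑' p, F p := (Equiv.prodComm ℕ ℕ).tsum_eq F
  have e3 : ∑' p : ℕ × ℕ, (F p + F p.swap) = ∑' p, (F p + F p) := by
    rw [ENNReal.tsum_add, ENNReal.tsum_add, e2]
  have e4 : ∀ p : ℕ × ℕ, ENNReal.ofReal
      (2 / sinh u * (tanh u ^ (2*(p.1+p.2)+2) / ((2*p.1+1)*(2*p.2+1)))) = F p + F p.swap := by
    intro p
    rw [hF]
    simp only [Prod.fst_swap, Prod.snd_swap]
    rw [← ENNReal.ofReal_add (by positivity) (by positivity), hs]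
    congr 1
    rw [add_comm p.2 p.1]
    field_simp
    ring
  have e5 : ∀ p : ℕ × ℕ, ENNReal.ofReal
      (2 / ((p.1+p.2+1)*(2*p.2+1)) * (tanh u ^ (2*(p.1+p.2)+1) / cosh u)) = F p + F p := by
    intro p
    rw [hF]
    simp only
    rw [← ENNReal.ofReal_add (by positivity) (by positivity)]
    congr 1
    ring
  rw [e1, tsum_congr e4, e3, tsum_congr e5]

lemma key_pt2 (u : ℝ) (hu : 0 < u) :
    ENNReal.ofReal (2 * u^2 / sinh u) = ∑' k : ℕ, ENNReal.ofReal
      (4 * (u^((3:ℝ)-1) * exp (-((2*k+1)*u)))) := by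
  have hx : exp (-(2*u)) < 1 := by rw [exp_lt_one_iff]; linarith
  have h := (hasSum_geometric_of_lt_one (exp_pos _).le hx).mul_left (4 * u^2 * exp (-u))
  have s0 := sinh_pos_iff.2 hu
  have e : ∀ k : ℕ, 4 * (u^((3:ℝ)-1) * exp (-((2*k+1)*u))) =
      4 * u^2 * exp (-u) * exp (-(2*u))^k := by
    intro k
    rw [← exp_nat_mul, mul_assoc (4 * u^2), ← exp_add, show (3:ℝ)-1 = (2:ℕ) by norm_num,
      rpow_natCast]
    ring_nf
  simp_rw [e]
  rw [← ENNReal.ofReal_tsum_of_nonneg _ h.summable, h.tsum_eq]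
  · congr 1
    have : 1 - exp (-(2*u)) = 2 * sinh u * exp (-u) := by
      rw [sinh_eq]
      have h1 : exp u * exp (-u) = 1 := by rw [← exp_add]; simp
      have h2 : exp (-(2*u)) = exp (-u) * exp (-u) := by rw [← exp_add]; ring_nf
      rw [h2]; linear_combination - h1
    rw [this]
    field_simp
    ring
  · intro k; positivity

lemma side1 : ∫⁻ u in Ioi (0:ℝ), ENNReal.ofReal (2 * u^2 / sinh u) =
    ∑' p : ℕ × ℕ, ENNReal.ofReal ((4:ℝ)^(p.1+p.2+1) /
      ((Nat.choose (2*(p.1+p.2+1)) (p.1+p.2+1) : ℝ) * ((p.1+p.2+1 : ℕ):ℝ)^2 * (2*p.2+1))) := by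
  rw [setLIntegral_congr_fun measurableSet_Ioi (fun u hu => key_pt u hu), lintegral_tsum]
  · refine tsum_congr fun p => ?_
    rw [← ofReal_integral_eq_lintegral_ofReal ((int_g _).const_mul _), integral_const_mul, val_g]
    · congr 1
      have p1 : (0:ℝ) < Nat.choose (2*(p.1+p.2+1)) (p.1+p.2+1) := by
        exact_mod_cast Nat.choose_pos (by omega)
      push_cast
      field_simp
    · filter_upwards [ae_restrict_mem measurableSet_Ioi] with u hu
      have t0 : 0 < tanh u := by
        rw [tanh_eq_sinh_div_cosh]; exact div_pos (sinh_pos_iff.2 hu) (cosh_pos u)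
      have c0 := cosh_pos u
      simp only [Pi.zero_apply]
      positivity
  · intro p
    exact (((cont_g _).const_mul _).measurable.ennreal_ofReal).aemeasurable

lemma side2 : ∫⁻ u in Ioi (0:ℝ), ENNReal.ofReal (2 * u^2 / sinh u) =
    ∑' k : ℕ, ENNReal.ofReal (8 * (1 / (2*(k:ℝ)+1)^3)) := by
  rw [setLIntegral_congr_fun measurableSet_Ioi (fun u hu => key_pt2 u hu), lintegral_tsum]
  · refine tsum_congr fun k => ?_
    have hr : (0:ℝ) < 2*k+1 := by positivity
    have key := integral_rpow_mul_exp_neg_mul_Ioi (a := 3) (by norm_num) hr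
    have hG : Gamma 3 = 2 := by
      have := Gamma_nat_eq_factorial 2
      norm_num at this
      simpa using this
    rw [hG] at key
    have hint : IntegrableOn (fun x:ℝ ↦ x ^ ((3 : ℝ) - 1) * rexp (-((2*k+1) * x))) (Ioi 0) :=
      .of_integral_ne_zero (by rw [key]; positivity)
    rw [← ofReal_integral_eq_lintegral_ofReal (hint.const_mul _), integral_const_mul, key]
    · congr 1
      rw [show (3:ℝ) = (3:ℕ) by norm_num, rpow_natCast]
      field_simp
      norm_num
    · filter_upwards [ae_restrict_mem measurableSet_Ioi] with u hu
      have hu' : 0 < u := hu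
      simp only [Pi.zero_apply]
      positivity
  · intro p
    exact Measurable.aemeasurable (by fun_prop)

lemma sum_zeta : Summable (fun n : ℕ => 1 / ((n:ℝ)+1)^3) := by
  have := (summable_nat_add_iff 1).2 (Real.summable_one_div_nat_pow.2 (show 1 < 3 by norm_num))
  simpa using this

lemma sum_odd : Summable (fun n : ℕ => 1 / (2*(n:ℝ)+1)^3) := by
  have := sum_zeta.comp_injective (i := fun n : ℕ => 2*n) (fun a b h => by simpa using h)
  simpa [Function.comp_def] using this

lemma odd_eq : 8 * ∑' k : ℕ, (1 / (2*(k:ℝ)+1)^3) = 7 * ∑' n : ℕ, 1 / ((n : ℝ) + 1) ^ 3 := by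
  have h2 : ∀ k : ℕ, 1 / (((2*k+1 : ℕ):ℝ)+1)^3 = 1/8 * (1 / ((k:ℝ)+1)^3) := by
    intro k; push_cast; field_simp; ring
  have h1 : ∀ k : ℕ, 1 / (((2*k : ℕ):ℝ)+1)^3 = 1 / (2*(k:ℝ)+1)^3 := by
    intro k; push_cast; ring
  have h := tsum_even_add_odd (f := fun n : ℕ => 1 / ((n:ℝ)+1)^3)
    (by simpa only [h1] using sum_odd) (by simpa only [h2] using sum_zeta.mul_left (1/8))
  simp only [h1, h2] at h
  rw [tsum_mul_left] at h
  linarith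

def eqv : ℕ × ℕ ≃ {p : ℕ × ℕ // p.2 < p.1} where
  toFun p := ⟨(p.1+p.2+1, p.2), by simp only; omega⟩
  invFun q := (q.1.1 - q.1.2 - 1, q.1.2)
  left_inv p := by ext <;> simp only <;> omega
  right_inv q := by
    have := q.2
    ext <;> simp only <;> omega

end Aux11

/-- `∑_{n₁ > n₂ ≥ 0} 4^{n₁}/(binom(2n₁,n₁) n₁² (2n₂+1)) = 7ζ(3)`. -/
theorem stmt11 :
    (∑' p : {p : ℕ × ℕ // p.2 < p.1},
      (4 : ℝ) ^ p.1.1 /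
        ((Nat.choose (2 * p.1.1) p.1.1 : ℝ) * (p.1.1 : ℝ) ^ 2 * (2 * (p.1.2 : ℝ) + 1))) =
    7 * ∑' n : ℕ, 1 / ((n : ℝ) + 1) ^ 3 := by
  have h0 := Aux11.side1.symm.trans Aux11.side2
  rw [← ENNReal.ofReal_tsum_of_nonneg (fun k => by positivity) (Aux11.sum_odd.mul_left 8),
    tsum_mul_left, Aux11.odd_eq] at h0
  have hz : 0 ≤ ∑' n : ℕ, 1 / ((n : ℝ) + 1) ^ 3 := tsum_nonneg fun n => by positivity
  rw [← Aux11.eqv.tsum_eq, ← ENNReal.toReal_ofReal (mul_nonneg (by norm_num : (0:ℝ) ≤ 7) hz),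
    ← h0, ENNReal.tsum_toReal_eq (fun _ => ENNReal.ofReal_ne_top)]
  refine tsum_congr fun p => ?_
  rw [ENNReal.toReal_ofReal (by positivity)]
  rfl
end

section
/- We have ∑_{n=1}^∞ 4^n / (binom(2n, n) · (2n−1)²) = 2G − π³/32 + 4 · Im(∑_{n=1}^∞ ((1+i)/2)^n / n³) − (π (log 2)²)/8, where G = ∑_{k=0}^∞ (−1)^k/(2k+1)² is Catalan's constant. -/
open Real Complex

lemma ps_bound {𝕜 : Type*} [RCLike 𝕜] (a : ℕ → 𝕜) (ha : ∀ n, ‖a n‖ ≤ 1) (e : ℕ → ℕ)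
    (he : Function.Injective e) (z : 𝕜) (hz : ‖z‖ < 1) :
    Summable (fun n => a n * z ^ (e n)) := by
  have h1 : Summable (fun n : ℕ => ‖z‖ ^ n) := summable_geometric_of_lt_one (norm_nonneg _) hz
  refine Summable.of_norm_bounded (h1.comp_injective he) fun n => ?_
  rw [norm_mul, norm_pow]
  simpa using mul_le_mul_of_nonneg_right (ha n) (pow_nonneg (norm_nonneg z) (e n))

lemma ps_bound' {𝕜 : Type*} [RCLike 𝕜] (a : ℕ → 𝕜) (ha : ∀ n, ‖a n‖ ≤ 1) (e : ℕ → ℕ)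
    (he : Function.Injective e) (z : 𝕜) (hz : ‖z‖ < 1) :
    Summable (fun n => (e n : 𝕜) * a n * z ^ (e n)) := by
  have h1 : Summable (fun n : ℕ => ‖((n : ℝ) ^ 1 * ‖z‖ ^ n : ℝ)‖) :=
    summable_norm_pow_mul_geometric_of_norm_lt_one 1 (by simpa using hz)
  refine Summable.of_norm_bounded (h1.comp_injective he) fun n => ?_
  simp only [norm_mul, norm_pow, RCLike.norm_natCast, Function.comp, pow_one, norm_norm]
  have := mul_le_mul_of_nonneg_left (ha n) (Nat.cast_nonneg (α := ℝ) (e n))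
  rw [mul_one] at this
  exact mul_le_mul_of_nonneg_right this (pow_nonneg (norm_nonneg z) (e n))

lemma ps_diff {𝕜 : Type*} [RCLike 𝕜] (a : ℕ → 𝕜) (ha : ∀ n, ‖a n‖ ≤ 1) (e : ℕ → ℕ)
    (he : Function.Injective e) (z : 𝕜) (hz : ‖z‖ < 1) :
    HasDerivAt (fun w => ∑' n, a n * w ^ (e n))
      (∑' n, a n * ((e n : 𝕜) * z ^ (e n - 1))) z := by
  obtain ⟨r, hr1, hr2⟩ := exists_between hz
  have hr0 : 0 < r := lt_of_le_of_lt (norm_nonneg _) hr1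
  have h1 : Summable (fun n : ℕ => ‖((n : ℝ) ^ 1 * r ^ n : ℝ)‖) :=
    summable_norm_pow_mul_geometric_of_norm_lt_one 1 (by rw [Real.norm_of_nonneg hr0.le]; exact hr2)
  have h2 : Summable (fun n : ℕ => (n : ℝ) * r ^ (n - 1)) := by
    refine (h1.mul_left (1 / r)).congr fun n => ?_
    rcases n with _ | n
    · simp
    · simp only [pow_one, norm_mul, Real.norm_natCast, norm_pow, Real.norm_of_nonneg hr0.le]
      rw [Nat.add_sub_cancel, pow_succ]
      field_simp
  have key := hasDerivAt_tsum_of_isPreconnected (𝕜 := 𝕜) (F := 𝕜) (g := fun n w => a n * w ^ (e n))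
    (g' := fun n w => a n * ((e n : 𝕜) * w ^ (e n - 1)))
    (t := Metric.ball 0 r) (y₀ := z) (y := z) (h2.comp_injective he)
    Metric.isOpen_ball (convex_ball (0 : 𝕜) r).isPreconnected
    (fun n y _ => (hasDerivAt_pow (e n) y).const_mul (a n)) ?_ (by simpa using hr1)
    (ps_bound a ha e he z hz) (by simpa using hr1)
  · exact key
  · intro n y hy
    have hy' : ‖y‖ ≤ r := by simpa using (Metric.mem_ball.1 hy).le
    simp only [norm_mul, norm_pow, RCLike.norm_natCast, Function.comp]
    have := ha n
    calc ‖a n‖ * ((e n : ℝ) * ‖y‖ ^ (e n - 1)) ≤ 1 * ((e n : ℝ) * r ^ (e n - 1)) := by gcongr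
      _ = _ := one_mul _

lemma ps_deriv {𝕜 : Type*} [RCLike 𝕜] (a : ℕ → 𝕜) (ha : ∀ n, ‖a n‖ ≤ 1) (e : ℕ → ℕ)
    (he : Function.Injective e) (z : 𝕜) (hz0 : z ≠ 0) (hz : ‖z‖ < 1) :
    HasDerivAt (fun w => ∑' n, a n * w ^ (e n))
      ((∑' n, (e n : 𝕜) * a n * z ^ (e n)) / z) z := by
  refine (ps_diff a ha e he z hz).congr_deriv ?_
  rw [← tsum_div_const]
  congr 1; ext n
  rcases h : e n with _ | m
  · simp
  · rw [Nat.add_sub_cancel, pow_succ]; field_simp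

lemma ps_cont {𝕜 : Type*} [RCLike 𝕜] (a : ℕ → 𝕜) (ha : Summable (fun n => ‖a n‖)) (e : ℕ → ℕ) :
    ContinuousOn (fun w => ∑' n, a n * w ^ (e n)) (Metric.closedBall (0 : 𝕜) 1) := by
  refine continuousOn_tsum (fun n => by fun_prop) ha fun n y hy => ?_
  have hy' : ‖y‖ ≤ 1 := by simpa using hy
  rw [norm_mul, norm_pow]
  exact mul_le_of_le_one_right (norm_nonneg _) (pow_le_one₀ (norm_nonneg _) hy')

lemma const_real (f : ℝ → ℝ) (b : ℝ) (hb : 0 < b) (hc : ContinuousOn f (Set.Icc 0 b))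
    (hd : ∀ x ∈ Set.Ioo 0 b, HasDerivAt f 0 x) : f b = f 0 := by
  obtain ⟨c, -, h⟩ := exists_hasDerivAt_eq_slope f (fun _ => 0) hb hc hd
  rw [eq_div_iff (by linarith)] at h
  linarith

lemma hasDerivAt_im' {f : ℝ → ℂ} {f' : ℂ} {x : ℝ} (h : HasDerivAt f f' x) :
    HasDerivAt (fun x => (f x).im) f'.im x :=
  (Complex.imCLM.hasFDerivAt.comp_hasDerivAt x h)

lemma hasDerivAt_re' {f : ℝ → ℂ} {f' : ℂ} {x : ℝ} (h : HasDerivAt f f' x) :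
    HasDerivAt (fun x => (f x).re) f'.re x :=
  (Complex.reCLM.hasFDerivAt.comp_hasDerivAt x h)

lemma const_cplx (f : ℝ → ℂ) (b : ℝ) (hb : 0 < b) (hc : ContinuousOn f (Set.Icc 0 b))
    (hd : ∀ x ∈ Set.Ioo 0 b, HasDerivAt f 0 x) : f b = f 0 := by
  apply Complex.ext
  · exact const_real (fun x => (f x).re) b hb (Complex.continuous_re.comp_continuousOn hc)
      (fun x hx => by simpa using hasDerivAt_re' (hd x hx))
  · exact const_real (fun x => (f x).im) b hb (Complex.continuous_im.comp_continuousOn hc)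
      (fun x hx => by simpa using hasDerivAt_im' (hd x hx))

noncomputable def Li (s : ℕ) (z : ℂ) : ℂ := ∑' n : ℕ, (1 / (n : ℂ) ^ s) * z ^ (id n)

lemma Li_coef (s n : ℕ) (hs : s ≠ 0) : ‖(1 / (n : ℂ) ^ s)‖ ≤ 1 := by
  rcases n with _ | n
  · simp [hs]
  · rw [norm_div, norm_one, norm_pow, Complex.norm_natCast]
    have : (1 : ℝ) ≤ ((n + 1 : ℕ) : ℝ) ^ s := one_le_pow₀ (by push_cast; linarith [Nat.cast_nonneg (α := ℝ) n])
    exact div_le_one_of_le₀ this (by positivity)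

lemma Li_cont (s : ℕ) (hs : 2 ≤ s) : ContinuousOn (Li s) (Metric.closedBall 0 1) := by
  refine ps_cont _ ?_ _
  simp only [norm_div, norm_one, norm_pow, Complex.norm_natCast]
  exact Real.summable_one_div_nat_pow.2 (by omega)

lemma Li_deriv (s : ℕ) (hs : s ≠ 0) (z : ℂ) (hz0 : z ≠ 0) (hz : ‖z‖ < 1) :
    HasDerivAt (Li (s + 1)) (Li s z / z) z := by
  have := ps_deriv (fun n : ℕ => 1 / (n : ℂ) ^ (s + 1)) (fun n => Li_coef _ _ (by omega)) id
    Function.injective_id z hz0 hz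
  refine HasDerivAt.congr_deriv this ?_
  symm
  congr 1
  unfold Li
  congr 1; ext n
  rcases n with _ | n
  · simp [hs]
  · have : ((n + 1 : ℕ) : ℂ) ≠ 0 := by exact_mod_cast n.succ_ne_zero
    simp only [id]
    field_simp
    ring

lemma Li_one (z : ℂ) (hz : ‖z‖ < 1) : Li 1 z = - Complex.log (1 - z) := by
  rw [← (Complex.hasSum_taylorSeries_neg_log hz).tsum_eq, Li]
  congr 1; ext n; simp; ring

lemma Li2_deriv (z : ℂ) (hz0 : z ≠ 0) (hz : ‖z‖ < 1) :
    HasDerivAt (Li 2) (- Complex.log (1 - z) / z) z := by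
  rw [← Li_one z hz]; exact Li_deriv 1 (by norm_num) z hz0 hz

noncomputable def cc (k : ℕ) : ℝ := 4 ^ (k + 1) / ((Nat.choose (2 * (k + 1)) (k + 1) : ℝ) * (2 * (k + 1)))

lemma cc_zero : cc 0 = 1 := by norm_num [cc]

lemma cc_succ (k : ℕ) : (2 * k + 3) * cc (k + 1) = (2 * k + 2) * cc k := by
  have h := Nat.succ_mul_centralBinom_succ (k + 1)
  simp only [Nat.centralBinom_eq_two_mul_choose] at h
  have h' : ((k : ℝ) + 2) * (Nat.choose (2 * (k + 1 + 1)) (k + 1 + 1) : ℝ)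
     = 2 * (2 * (k + 1) + 1) * (Nat.choose (2 * (k + 1)) (k + 1) : ℝ) := by
    have := congrArg (Nat.cast (R := ℝ)) h
    push_cast at this
    linarith
  have p1 : (0 : ℝ) < (Nat.choose (2 * (k + 1)) (k + 1) : ℝ) := by
    exact_mod_cast Nat.choose_pos (by omega)
  have p2 : (0 : ℝ) < (Nat.choose (2 * (k + 1 + 1)) (k + 1 + 1) : ℝ) := by
    exact_mod_cast Nat.choose_pos (by omega)
  unfold cc
  push_cast
  generalize (Nat.choose (2 * (k + 1)) (k + 1) : ℝ) = x at *
  generalize (Nat.choose (2 * (k + 1 + 1)) (k + 1 + 1) : ℝ) = y at *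
  have hk : (0 : ℝ) ≤ k := Nat.cast_nonneg k
  rw [mul_div_assoc', mul_div_assoc', div_eq_div_iff (by positivity) (by positivity)]
  have h3 : ((k : ℝ) + 1 + 1) * y = 2 * (2 * (k + 1) + 1) * x := by rw [← h']; ring
  calc (2 * (k : ℝ) + 3) * 4 ^ (k + 1 + 1) * (x * (2 * (k + 1)))
      = 4 ^ (k + 1) * (2 * (k + 1)) * 2 * (2 * (2 * (k + 1) + 1) * x) := by ring
    _ = _ := by rw [← h3]; ring

lemma cc_pos (k : ℕ) : 0 < cc k := by
  have p1 : (0 : ℝ) < (Nat.choose (2 * (k + 1)) (k + 1) : ℝ) := by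
    exact_mod_cast Nat.choose_pos (by omega)
  unfold cc; positivity

lemma cc_sq (k : ℕ) : cc k ^ 2 * (k + 1) ≤ 1 := by
  induction k with
  | zero => simp [cc_zero]
  | succ k ih =>
    have h := cc_succ k
    have hk : (0 : ℝ) ≤ k := Nat.cast_nonneg k
    have h2 : cc (k + 1) = (2 * k + 2) * cc k / (2 * k + 3) := by
      rw [eq_div_iff (by positivity)]; linarith
    rw [h2]; push_cast
    have : ((2 * (k : ℝ) + 2) * cc k / (2 * k + 3)) ^ 2 * (k + 1 + 1)
      = cc k ^ 2 * (k + 1) * ((4 * (k + 1) * (k + 2)) / (2 * k + 3) ^ 2) := by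
      field_simp; ring
    rw [this]
    refine mul_le_one₀ ih (by positivity) ?_
    rw [div_le_one (by positivity)]; nlinarith

lemma cc_le_one (k : ℕ) : cc k ≤ 1 := by
  have := cc_sq k
  have hk : (0 : ℝ) ≤ k := Nat.cast_nonneg k
  nlinarith [cc_pos k, sq_nonneg (cc k), mul_nonneg (sq_nonneg (cc k)) hk]

lemma le_of_sq_le_sq_one {x : ℝ} (h : x ^ 2 ≤ 1) : x ≤ 1 := by nlinarith [sq_nonneg (x - 1)]

lemma cc_summable : Summable (fun k : ℕ => cc k / (2 * (k : ℝ) + 1)) := by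
  have h0 : Summable (fun n : ℕ => 1 / (n : ℝ) ^ (3 / 2 : ℝ)) :=
    Real.summable_one_div_nat_rpow.2 (by norm_num)
  have h1 := (summable_nat_add_iff 1).2 h0
  refine Summable.of_nonneg_of_le (fun k => ?_) (fun k => ?_) h1
  · have := cc_pos k; positivity
  · have hk : (0 : ℝ) ≤ k := Nat.cast_nonneg k
    have hp : (((k + 1 : ℕ) : ℝ)) ^ (3 / 2 : ℝ) = (k + 1) * √(k + 1) := by
      rw [show (3 / 2 : ℝ) = 1 + 1 / 2 by norm_num, Real.rpow_add (by positivity), Real.rpow_one,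
        ← Real.sqrt_eq_rpow]
      push_cast; rfl
    rw [hp]
    have hs : cc k * √(k + 1) ≤ 1 := by
      have h := cc_sq k
      refine le_of_sq_le_sq_one ?_
      rw [mul_pow, Real.sq_sqrt (by positivity)]; exact h
    have hs0 : 0 < √((k : ℝ) + 1) := Real.sqrt_pos.2 (by positivity)
    rw [div_le_div_iff₀ (by positivity) (by positivity)]
    nlinarith

noncomputable def PP (s : ℕ) (t : ℝ) : ℝ := ∑' k : ℕ, (cc k / (2 * (k : ℝ) + 1) ^ s) * t ^ (2 * k + 1)

lemma odd_inj : Function.Injective (fun k : ℕ => 2 * k + 1) := fun a b h => by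
  simp only at h; omega

lemma PP_coef (s k : ℕ) : ‖cc k / (2 * (k : ℝ) + 1) ^ s‖ ≤ 1 := by
  have hk : (0 : ℝ) ≤ k := Nat.cast_nonneg k
  have h0 := cc_pos k
  rw [Real.norm_of_nonneg (by positivity)]
  refine div_le_one_of_le₀ ?_ (by positivity)
  exact (cc_le_one k).trans (one_le_pow₀ (by linarith))

lemma PP_coef_summable (s : ℕ) (hs : s ≠ 0) : Summable (fun k : ℕ => cc k / (2 * (k : ℝ) + 1) ^ s) := by
  refine Summable.of_nonneg_of_le (fun k => ?_) (fun k => ?_) cc_summable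
  · have := cc_pos k; positivity
  · have hk : (0 : ℝ) ≤ k := Nat.cast_nonneg k
    have := cc_pos k
    gcongr
    exact le_self_pow₀ (by linarith) hs

lemma PP_cont (s : ℕ) (hs : s ≠ 0) : ContinuousOn (PP s) (Metric.closedBall 0 1) := by
  refine ps_cont _ ?_ _
  exact (PP_coef_summable s hs).norm

lemma PP_deriv (s : ℕ) (z : ℝ) (hz0 : z ≠ 0) (hz : ‖z‖ < 1) :
    HasDerivAt (PP (s + 1)) (PP s z / z) z := by
  have := ps_deriv (fun n : ℕ => cc n / (2 * (n : ℝ) + 1) ^ (s + 1)) (fun n => PP_coef _ _)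
    (fun k : ℕ => 2 * k + 1) odd_inj z hz0 hz
  refine HasDerivAt.congr_deriv this ?_
  symm
  congr 1
  unfold PP
  congr 1; ext n
  have : 2 * (n : ℝ) + 1 ≠ 0 := by positivity
  push_cast
  field_simp
  ring

lemma PP_ode (z : ℝ) (hz0 : z ≠ 0) (hz : ‖z‖ < 1) :
    ∃ d, HasDerivAt (PP 0) d z ∧ (1 - z ^ 2) * d = 1 + z * PP 0 z := by
  refine ⟨_, ps_deriv (fun n : ℕ => cc n / (2 * (n : ℝ) + 1) ^ 0) (fun n => PP_coef _ _)
    (fun k : ℕ => 2 * k + 1) odd_inj z hz0 hz, ?_⟩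
  have s1 := ps_bound (fun n : ℕ => cc n / (2 * (n : ℝ) + 1) ^ 0) (fun n => PP_coef _ _)
    (fun k : ℕ => 2 * k + 1) odd_inj z hz
  have s2 := ps_bound' (fun n : ℕ => cc n / (2 * (n : ℝ) + 1) ^ 0) (fun n => PP_coef _ _)
    (fun k : ℕ => 2 * k + 1) odd_inj z hz
  have e1 := s2.tsum_eq_zero_add
  have e2 : ∑' n : ℕ, (((2 * (n + 1) + 1 : ℕ) : ℝ)) * (cc (n + 1) / (2 * ((n + 1 : ℕ) : ℝ) + 1) ^ 0) * z ^ (2 * (n + 1) + 1)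
    = z ^ 2 * (∑' n : ℕ, (((2 * n + 1 : ℕ) : ℝ)) * (cc n / (2 * (n : ℝ) + 1) ^ 0) * z ^ (2 * n + 1) + PP 0 z) := by
    unfold PP
    rw [← s2.tsum_add s1, ← tsum_mul_left]
    congr 1; ext n
    have := cc_succ n
    push_cast
    simp only [pow_zero, div_one]
    linear_combination z ^ (2 * n + 3) * this
  rw [e2] at e1
  simp only [cc_zero, mul_zero, zero_add, pow_one, pow_zero, div_one, Nat.cast_one, one_mul] at e1 ⊢
  generalize (∑' n : ℕ, (((2 * n + 1 : ℕ) : ℝ)) * cc n * z ^ (2 * n + 1)) = D at *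
  field_simp
  linear_combination e1

lemma re_one (u : ℝ) : (1 + Complex.I * (u : ℂ)).re = 1 := by simp
lemma im_one (u : ℝ) : (1 + Complex.I * (u : ℂ)).im = u := by simp

lemma slit_one (u : ℝ) : (1 + Complex.I * (u : ℂ)) ∈ Complex.slitPlane := by
  left; rw [re_one]; norm_num

lemma ne_one (u : ℝ) : (1 + Complex.I * (u : ℂ)) ≠ 0 := Complex.slitPlane_ne_zero (slit_one u)

noncomputable def Lg (u : ℝ) : ℂ := Complex.log (1 + Complex.I * (u : ℂ))

lemma lin_deriv (u : ℝ) : HasDerivAt (fun u : ℝ => (1 + Complex.I * (u : ℂ))) Complex.I u := by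
  have h : HasDerivAt (fun u : ℝ => (u : ℂ)) 1 u := Complex.ofRealCLM.hasDerivAt
  simpa using (h.const_mul Complex.I).const_add 1

lemma Lg_deriv (u : ℝ) : HasDerivAt Lg (Complex.I / (1 + Complex.I * (u : ℂ))) u :=
  (lin_deriv u).clog_real (slit_one u)

lemma Lg_zero : Lg 0 = 0 := by simp [Lg]

lemma arg_one (u : ℝ) : |(1 + Complex.I * (u : ℂ)).arg| < π / 2 := by
  rw [Complex.abs_arg_lt_pi_div_two_iff]; left; rw [re_one]; norm_num

lemma arg_ne_pi (u : ℝ) : (1 + Complex.I * (u : ℂ)).arg ≠ π := by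
  have := (abs_lt.1 (arg_one u)).2
  have := Real.pi_pos
  linarith

lemma log_conj_one (u : ℝ) : Complex.log (1 - Complex.I * (u : ℂ)) = (starRingEnd ℂ) (Lg u) := by
  rw [Lg, ← Complex.log_conj _ (arg_ne_pi u)]
  congr 1; simp [sub_eq_add_neg]

lemma log_inv_one (u : ℝ) : Complex.log ((1 + Complex.I * (u : ℂ))⁻¹) = - Lg u :=
  Complex.log_inv _ (arg_ne_pi u)

lemma norm_lt_one_aux (u : ℝ) (hu : 0 < u) : ‖(1 + Complex.I * (u : ℂ))⁻¹‖ < 1 := by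
  rw [norm_inv]
  apply inv_lt_one_of_one_lt₀
  rw [← one_lt_sq_iff₀ (norm_nonneg _), Complex.sq_norm, Complex.normSq_apply, re_one, im_one]
  nlinarith

lemma norm_le_one_aux (u : ℝ) (hu : 0 ≤ u) : ‖(1 + Complex.I * (u : ℂ))⁻¹‖ ≤ 1 := by
  rcases hu.eq_or_lt with rfl | h
  · simp
  · exact (norm_lt_one_aux u h).le

lemma log_one_sub (u : ℝ) (hu : 0 < u) :
    Complex.log (1 - (1 + Complex.I * (u : ℂ))⁻¹) = Real.log u + Complex.I * (π / 2) - Lg u := by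
  have h0 := ne_one u
  have e : 1 - (1 + Complex.I * (u : ℂ))⁻¹ = u * (Complex.I * (1 + Complex.I * (u : ℂ))⁻¹) := by
    field_simp; ring
  have hI : Complex.I * (1 + Complex.I * (u : ℂ))⁻¹ ≠ 0 := mul_ne_zero Complex.I_ne_zero (inv_ne_zero h0)
  rw [e, Complex.log_ofReal_mul hu hI, Complex.log_mul Complex.I_ne_zero (inv_ne_zero h0), log_inv_one,
    Complex.log_I]
  · ring
  · rw [Complex.arg_I, Complex.arg_inv, if_neg (arg_ne_pi u)]
    have := abs_lt.1 (arg_one u)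
    have := Real.pi_pos
    constructor <;> linarith

lemma inv_deriv (u : ℝ) : HasDerivAt (fun u : ℝ => (1 + Complex.I * (u : ℂ))⁻¹)
    (- Complex.I * ((1 + Complex.I * (u : ℂ))⁻¹) ^ 2) u := by
  refine ((lin_deriv u).fun_inv (ne_one u)).congr_deriv ?_
  have := ne_one u
  field_simp

lemma Liv_deriv (s : ℕ) (hs : s ≠ 0) (u : ℝ) (hu : 0 < u) :
    HasDerivAt (fun u : ℝ => Li (s + 1) ((1 + Complex.I * (u : ℂ))⁻¹))
      (- Complex.I * (1 + Complex.I * (u : ℂ))⁻¹ * Li s ((1 + Complex.I * (u : ℂ))⁻¹)) u := by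
  have h0 := inv_ne_zero (ne_one u)
  refine ((Li_deriv s hs _ h0 (norm_lt_one_aux u hu)).comp u (inv_deriv u)).congr_deriv ?_
  generalize (1 + Complex.I * (u : ℂ))⁻¹ = v at *
  field_simp

lemma Liv_cont (s : ℕ) (hs : 2 ≤ s) :
    ContinuousOn (fun u : ℝ => Li s ((1 + Complex.I * (u : ℂ))⁻¹)) (Set.Icc 0 1) := by
  refine (Li_cont s hs).comp (fun u _ => (inv_deriv u).continuousAt.continuousWithinAt) ?_
  intro u hu
  simpa using norm_le_one_aux u hu.1

lemma Lii_deriv (s : ℕ) (hs : s ≠ 0) (u : ℝ) (hu : 0 < u) (hu1 : u < 1) :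
    HasDerivAt (fun u : ℝ => Li (s + 1) (Complex.I * u)) (Li s (Complex.I * u) / u) u := by
  have h0 : Complex.I * (u : ℂ) ≠ 0 := mul_ne_zero Complex.I_ne_zero (by exact_mod_cast hu.ne')
  have h : HasDerivAt (fun u : ℝ => (u : ℂ)) 1 u := Complex.ofRealCLM.hasDerivAt
  have h1 : ‖Complex.I * (u : ℂ)‖ < 1 := by simpa [abs_of_pos hu] using hu1
  refine ((Li_deriv s hs _ h0 h1).comp u (h.const_mul Complex.I)).congr_deriv ?_
  have : (u : ℂ) ≠ 0 := by exact_mod_cast hu.ne'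
  field_simp

lemma Lii_cont (s : ℕ) (hs : 2 ≤ s) :
    ContinuousOn (fun u : ℝ => Li s (Complex.I * u)) (Set.Icc 0 1) := by
  refine (Li_cont s hs).comp (by fun_prop) ?_
  intro u hu
  simpa [abs_of_nonneg hu.1] using hu.2

lemma Li_zero (s : ℕ) (hs : s ≠ 0) : Li s 0 = 0 := by
  unfold Li
  rw [← tsum_zero (α := ℂ) (β := ℕ)]
  congr 1; ext n
  rcases n with _ | n <;> simp [hs]

lemma Li1_I (u : ℝ) (hu : 0 < u) (hu1 : u < 1) : Li 1 (Complex.I * u) = - (starRingEnd ℂ) (Lg u) := by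
  rw [Li_one _ (by simpa [abs_of_pos hu] using hu1), log_conj_one]

/-- Landen at the point (1-i)/2. -/
lemma landen : Li 2 (1 - (1 - Complex.I)⁻¹) + Li 2 Complex.I
    + (1 / 2) * ((starRingEnd ℂ) (Lg 1)) ^ 2 = 0 := by
  have hlin : ∀ u : ℝ, HasDerivAt (fun u : ℝ => (1 - Complex.I * (u : ℂ))) (-Complex.I) u := fun u => by
    have h : HasDerivAt (fun u : ℝ => (u : ℂ)) 1 u := Complex.ofRealCLM.hasDerivAt
    simpa using (h.const_mul Complex.I).const_sub 1
  have hsl : ∀ u : ℝ, (1 - Complex.I * (u : ℂ)) ∈ Complex.slitPlane := fun u => by left; simp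
  have hne : ∀ u : ℝ, (1 - Complex.I * (u : ℂ)) ≠ 0 := fun u => Complex.slitPlane_ne_zero (hsl u)
  have hz : ∀ u : ℝ, 1 - (1 - Complex.I * (u : ℂ))⁻¹ = - Complex.I * u / (1 - Complex.I * (u : ℂ)) :=
    fun u => by have := hne u; field_simp; ring
  have hnorm : ∀ u : ℝ, ‖1 - (1 - Complex.I * (u : ℂ))⁻¹‖ < 1 := fun u => by
    rw [hz, norm_div, div_lt_one (norm_pos_iff.2 (hne u)),
      ← sq_lt_sq₀ (norm_nonneg _) (norm_nonneg _), Complex.sq_norm, Complex.sq_norm,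
      Complex.normSq_apply, Complex.normSq_apply]
    simp
  have hzd : ∀ u : ℝ, HasDerivAt (fun u : ℝ => 1 - (1 - Complex.I * (u : ℂ))⁻¹)
      (-Complex.I / (1 - Complex.I * (u : ℂ)) ^ 2) u := fun u => by
    refine (((hlin u).fun_inv (hne u)).const_sub 1).congr_deriv ?_
    have := hne u
    field_simp
  have key := const_cplx (fun u : ℝ => Li 2 (1 - (1 - Complex.I * (u : ℂ))⁻¹) + Li 2 (Complex.I * u)
    + (1 / 2) * (Complex.log (1 - Complex.I * (u : ℂ))) ^ 2) 1 one_pos ?_ ?_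
  · simp only [log_conj_one, Lg_zero] at key
    simpa [Li_zero] using key
  · refine ((ContinuousOn.add ?_ (Lii_cont 2 le_rfl)).add ?_)
    · refine (Li_cont 2 le_rfl).comp (fun u _ => (hzd u).continuousAt.continuousWithinAt) ?_
      intro u _
      simpa using (hnorm u).le
    · intro u _
      exact ((((hlin u).clog_real (hsl u)).pow 2).const_mul _).continuousAt.continuousWithinAt
  · intro u hu
    have hu0 : (u : ℂ) ≠ 0 := by exact_mod_cast hu.1.ne'
    have h0 := hne u
    have hz0 : 1 - (1 - Complex.I * (u : ℂ))⁻¹ ≠ 0 := by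
      rw [hz]; exact div_ne_zero (mul_ne_zero (neg_ne_zero.2 Complex.I_ne_zero) hu0) h0
    have d1 := (Li2_deriv _ hz0 (hnorm u)).comp u (hzd u)
    have d2 := Lii_deriv 1 one_ne_zero u hu.1 hu.2
    have d3 := (((hlin u).clog_real (hsl u)).pow 2).const_mul (1 / 2 : ℂ)
    refine ((d1.add d2).add d3).congr_deriv ?_
    have e1 : Complex.log (1 - (1 - (1 - Complex.I * (u : ℂ))⁻¹)) = - Complex.log (1 - Complex.I * (u : ℂ)) := by
      rw [sub_sub_cancel, Complex.log_inv]
      exact (Complex.mem_slitPlane_iff_arg.1 (hsl u)).1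
    rw [e1, Li1_I u hu.1 hu.2, ← log_conj_one, hz]
    generalize Complex.log (1 - Complex.I * (u : ℂ)) = l
    field_simp
    ring

noncomputable def tt (u : ℝ) : ℝ := 2 * u / (1 + u ^ 2)

lemma tt_deriv (u : ℝ) : HasDerivAt tt (2 * (1 - u ^ 2) / (1 + u ^ 2) ^ 2) u := by
  have h1 : HasDerivAt (fun u : ℝ => 2 * u) 2 u := by simpa using (hasDerivAt_id u).const_mul 2
  have h2 : HasDerivAt (fun u : ℝ => 1 + u ^ 2) (2 * u) u := by
    simpa using (hasDerivAt_pow 2 u).const_add 1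
  have h3 : 1 + u ^ 2 ≠ 0 := by positivity
  refine (h1.div h2 h3).congr_deriv ?_
  field_simp; ring

lemma tt_pos (u : ℝ) (hu : 0 < u) : 0 < tt u := by unfold tt; positivity

lemma tt_lt (u : ℝ) (hu : u < 1) : tt u < 1 := by
  unfold tt; rw [div_lt_one (by positivity)]; nlinarith

lemma tt_le (u : ℝ) : tt u ≤ 1 := by
  unfold tt; rw [div_le_one (by positivity)]; nlinarith [sq_nonneg (u - 1)]

lemma tt_norm (u : ℝ) (hu0 : 0 ≤ u) (hu : u < 1) : ‖tt u‖ < 1 := by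
  rw [Real.norm_of_nonneg (by unfold tt; positivity)]; exact tt_lt u hu

lemma PP_zero (s : ℕ) : PP s 0 = 0 := by simp [PP]

lemma I_div_im (u : ℝ) : (Complex.I / (1 + Complex.I * (u : ℂ))).im = 1 / (1 + u ^ 2) := by
  rw [Complex.div_im, Complex.normSq_apply, re_one, im_one]; simp; ring

lemma I_div_re (u : ℝ) : (Complex.I / (1 + Complex.I * (u : ℂ))).re = u / (1 + u ^ 2) := by
  rw [Complex.div_re, Complex.normSq_apply, re_one, im_one]; simp; ring

lemma PP0_eq (x : ℝ) (hx : 0 < x) (hx1 : x < 1) :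
    PP 0 (tt x) * ((1 - x ^ 2) / (1 + x ^ 2)) = 2 * (Lg x).im := by
  have hw : ∀ u : ℝ, HasDerivAt (fun u : ℝ => (1 - u ^ 2) / (1 + u ^ 2)) (- 4 * u / (1 + u ^ 2) ^ 2) u := by
    intro u
    have h1 : HasDerivAt (fun u : ℝ => 1 - u ^ 2) (- (2 * u)) u := by
      simpa using (hasDerivAt_pow 2 u).const_sub 1
    have h2 : HasDerivAt (fun u : ℝ => 1 + u ^ 2) (2 * u) u := by
      simpa using (hasDerivAt_pow 2 u).const_add 1
    have h3 : 1 + u ^ 2 ≠ 0 := by positivity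
    refine (h1.div h2 h3).congr_deriv ?_
    field_simp; ring
  have key := const_real (fun u => PP 0 (tt u) * ((1 - u ^ 2) / (1 + u ^ 2)) - 2 * (Lg u).im) x hx ?_ ?_
  · simp [Lg_zero, tt, PP_zero] at key
    simp only [tt]
    linarith
  · intro u hu
    have c1 : ContinuousAt (fun u => PP 0 (tt u)) u := by
      have := (ps_diff (fun n : ℕ => cc n / (2 * (n : ℝ) + 1) ^ 0) (fun n => PP_coef _ _)
        (fun k : ℕ => 2 * k + 1) odd_inj (tt u) (tt_norm u hu.1 (lt_of_le_of_lt hu.2 hx1))).continuousAt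
      exact ContinuousAt.comp (f := tt) (g := PP 0) this (tt_deriv u).continuousAt
    exact ((c1.mul (hw u).continuousAt).sub
      ((hasDerivAt_im' (Lg_deriv u)).continuousAt.const_mul 2)).continuousWithinAt
  · intro u hu
    obtain ⟨d, hd, hode⟩ := PP_ode (tt u) (tt_pos u hu.1).ne' (tt_norm u hu.1.le (hu.2.trans hx1))
    refine (((hd.comp u (tt_deriv u)).mul (hw u)).sub
      ((hasDerivAt_im' (Lg_deriv u)).const_mul 2)).congr_deriv ?_
    rw [I_div_im]
    simp only [Function.comp]
    generalize PP 0 (tt u) = A at *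
    unfold tt at hode
    have h3 : 1 + u ^ 2 ≠ 0 := by positivity
    field_simp at hode ⊢
    linear_combination 2 * hode

noncomputable def Ti (s : ℕ) (u : ℝ) : ℝ := (Li s (Complex.I * u)).im

lemma Ti_cont (s : ℕ) (hs : 2 ≤ s) : ContinuousOn (Ti s) (Set.Icc 0 1) :=
  Complex.continuous_im.comp_continuousOn (Lii_cont s hs)

lemma Ti_deriv (s : ℕ) (hs : s ≠ 0) (u : ℝ) (hu : 0 < u) (hu1 : u < 1) :
    HasDerivAt (Ti (s + 1)) (Ti s u / u) u := by
  refine (hasDerivAt_im' (Lii_deriv s hs u hu hu1)).congr_deriv ?_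
  rw [Complex.div_ofReal_im]; rfl

lemma Ti1 (u : ℝ) (hu : 0 < u) (hu1 : u < 1) : Ti 1 u = (Lg u).im := by
  rw [Ti, Li1_I u hu hu1]; simp

lemma Ti_zero (s : ℕ) (hs : s ≠ 0) : Ti s 0 = 0 := by simp [Ti, Li_zero s hs]

lemma PPt_cont (s : ℕ) (hs : s ≠ 0) : ContinuousOn (fun u => PP s (tt u)) (Set.Icc 0 1) := by
  refine (PP_cont s hs).comp (fun u _ => (tt_deriv u).continuousAt.continuousWithinAt) ?_
  intro u hu
  have h0 : 0 ≤ tt u := by have := hu.1; unfold tt; positivity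
  simpa [abs_of_nonneg h0] using tt_le u

lemma PP1_eq (x : ℝ) (hx : 0 < x) (hx1 : x ≤ 1) : PP 1 (tt x) = 2 * Ti 2 x := by
  have key := const_real (fun u => PP 1 (tt u) - 2 * Ti 2 u) x hx ?_ ?_
  · have h0 : tt 0 = 0 := by simp [tt]
    simp only [h0, PP_zero, Ti_zero 2 two_ne_zero] at key
    linarith
  · exact ((PPt_cont 1 one_ne_zero).sub ((Ti_cont 2 le_rfl).const_mul 2)).mono (Set.Icc_subset_Icc_right hx1)
  · intro u hu
    have hu1 := lt_of_lt_of_le hu.2 hx1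
    have hu0 := hu.1
    have d1 := (PP_deriv 0 (tt u) (tt_pos u hu.1).ne' (tt_norm u hu.1.le hu1)).comp u (tt_deriv u)
    refine (d1.sub ((Ti_deriv 1 one_ne_zero u hu.1 hu1).const_mul 2)).congr_deriv ?_
    have e := PP0_eq u hu.1 hu1
    rw [Ti1 u hu.1 hu1]
    generalize PP 0 (tt u) = A at *
    unfold tt
    have h3 : 1 + u ^ 2 ≠ 0 := by positivity
    field_simp at e ⊢
    linear_combination e

noncomputable def HH (u : ℝ) : ℂ := (Lg u) ^ 3 / 3 + (Lg u) * ((Lg u) * (Real.log u : ℂ))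
  + (Lg u) ^ 2 * (Complex.I * (π / 2) - Lg u)
  - 2 * Lg u * Li 2 ((1 + Complex.I * (u : ℂ))⁻¹) - 2 * Li 3 ((1 + Complex.I * (u : ℂ))⁻¹)

lemma Lg_cont : Continuous Lg := continuous_iff_continuousAt.2 fun u => (Lg_deriv u).continuousAt

lemma Lglog_cont : ContinuousOn (fun u : ℝ => (Lg u) * (Real.log u : ℂ)) (Set.Icc 0 1) := by
  intro u hu
  apply ContinuousAt.continuousWithinAt
  rcases eq_or_ne u 0 with rfl | h
  · unfold ContinuousAt
    simp only [Lg_zero, zero_mul]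
    have h1 : Filter.Tendsto (fun u : ℝ => 3 / 2 * |u * Real.log u|) (nhds 0) (nhds 0) := by
      have := (Real.continuous_mul_log.abs.const_mul (3 / 2)).tendsto 0
      simpa using this
    refine squeeze_zero_norm' ?_ h1
    have : ∀ᶠ u : ℝ in nhds 0, |u| < 1 / 2 := by
      have := Metric.ball_mem_nhds (0 : ℝ) (show (0 : ℝ) < 1 / 2 by norm_num)
      filter_upwards [this] with u hu
      simpa using hu
    filter_upwards [this] with u hu
    have := Complex.norm_log_one_add_half_le_self (z := Complex.I * (u : ℂ)) (by simpa using hu.le)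
    rw [norm_mul, abs_mul, Lg, Complex.norm_real, Real.norm_eq_abs, ← mul_assoc]
    gcongr
    simpa using this
  · have h1 : ContinuousAt (fun u : ℝ => ((Real.log u : ℝ) : ℂ)) u :=
      Complex.continuous_ofReal.continuousAt.comp (Real.continuousAt_log h)
    exact Lg_cont.continuousAt.mul h1

lemma HH_cont : ContinuousOn HH (Set.Icc 0 1) := by
  have := Lglog_cont
  have := Liv_cont 2 le_rfl
  have := Liv_cont 3 (by norm_num)
  have := Lg_cont.continuousOn (s := Set.Icc 0 1)
  unfold HH
  fun_prop

lemma HH_deriv (u : ℝ) (hu : 0 < u) : HasDerivAt HH ((Lg u) ^ 2 / u) u := by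
  have hL := Lg_deriv u
  have hl : HasDerivAt (fun u : ℝ => ((Real.log u : ℝ) : ℂ)) ((u⁻¹ : ℝ) : ℂ) u :=
    (Real.hasDerivAt_log hu.ne').ofReal_comp
  have d2 := Liv_deriv 1 one_ne_zero u hu
  have d3 := Liv_deriv 2 two_ne_zero u hu
  have := (((((hL.fun_pow 3).div_const 3).fun_add (hL.fun_mul (hL.fun_mul hl))).fun_add
    ((hL.fun_pow 2).fun_mul (hL.const_sub (Complex.I * (π / 2))))).fun_sub
    ((hL.const_mul 2).fun_mul d2)).fun_sub (d3.const_mul 2)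
  refine this.congr_deriv ?_
  rw [Li_one _ (norm_lt_one_aux u hu), log_one_sub u hu]
  have hu0 : (u : ℂ) ≠ 0 := by exact_mod_cast hu.ne'
  rw [div_eq_mul_inv Complex.I]
  push_cast
  generalize (1 + Complex.I * (u : ℂ))⁻¹ = v
  generalize Lg u = l
  field_simp
  ring

lemma main_eq : PP 2 1 + 4 * Ti 2 1 * (Lg 1).re - 2 * Ti 3 1 - 2 * (HH 1).im = 4 * (Li 3 1).im := by
  have key := const_real (fun u => PP 2 (tt u) + 4 * Ti 2 u * (Lg u).re - 2 * Ti 3 u - 2 * (HH u).im)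
    1 one_pos ?_ ?_
  · have h0 : tt 0 = 0 := by simp [tt]
    have h1 : tt 1 = 1 := by norm_num [tt]
    have h2 : HH 0 = - 2 * Li 3 1 := by simp [HH, Lg_zero]
    simp only [h0, h1, PP_zero, Ti_zero 2 two_ne_zero, Ti_zero 3 three_ne_zero, h2] at key
    rw [key]
    simp
    ring
  · have := PPt_cont 2 two_ne_zero
    have := Ti_cont 2 le_rfl
    have := Ti_cont 3 (by norm_num)
    have h1 := Complex.continuous_im.comp_continuousOn HH_cont
    have h2 := Complex.continuous_re.comp_continuousOn (Lg_cont.continuousOn (s := Set.Icc 0 1))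
    simp only [Function.comp_def] at h1 h2
    fun_prop
  · intro u hu
    have hu0 := hu.1
    have d1 := (PP_deriv 1 (tt u) (tt_pos u hu.1).ne' (tt_norm u hu.1.le hu.2)).comp u (tt_deriv u)
    have d2 := Ti_deriv 1 one_ne_zero u hu.1 hu.2
    have d3 := Ti_deriv 2 two_ne_zero u hu.1 hu.2
    have d4 := hasDerivAt_im' (HH_deriv u hu.1)
    have d5 := hasDerivAt_re' (Lg_deriv u)
    refine (((d1.add ((d2.const_mul 4).mul d5)).sub (d3.const_mul 2)).sub (d4.const_mul 2)).congr_deriv ?_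
    rw [I_div_re, Ti1 u hu.1 hu.2, PP1_eq u hu.1 hu.2.le, Complex.div_ofReal_im, sq (Lg u), Complex.mul_im]
    unfold tt
    have h3 : 1 + u ^ 2 ≠ 0 := by positivity
    field_simp
    ring

lemma Li3_one_im : (Li 3 1).im = 0 := by
  have : (starRingEnd ℂ) (Li 3 1) = Li 3 1 := by
    unfold Li; rw [Complex.conj_tsum]; simp
  exact Complex.conj_eq_iff_im.1 this

lemma Lg_one : Lg 1 = (Real.log 2 / 2 : ℝ) + (π / 4 : ℝ) * Complex.I := by
  have h : (1 + Complex.I * ((1 : ℝ) : ℂ)) = (√2 : ℝ) * Complex.exp ((π / 4 : ℝ) * Complex.I) := by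
    rw [Complex.exp_mul_I, ← Complex.ofReal_cos, ← Complex.ofReal_sin, Real.cos_pi_div_four, Real.sin_pi_div_four]
    have : ((√2 : ℝ) : ℂ) * (√2 : ℝ) = 2 := by
      rw [← Complex.ofReal_mul, Real.mul_self_sqrt (by norm_num)]; norm_num
    push_cast at this ⊢
    linear_combination (-(1 : ℂ) / 2 - Complex.I / 2) * this
  rw [Lg, h, Complex.log_ofReal_mul (by positivity) (Complex.exp_ne_zero _), Complex.log_exp, Real.log_sqrt (by norm_num)]
  · simp; linarith [Real.pi_pos]
  · simp; linarith [Real.pi_pos]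

lemma I_pow_eq (n : ℕ) : Complex.I ^ n = (Real.cos (π * n / 2) : ℂ) + (Real.sin (π * n / 2) : ℂ) * Complex.I := by
  have h : Complex.I = Complex.exp ((π / 2 : ℝ) * Complex.I) := by
    rw [Complex.exp_mul_I, ← Complex.ofReal_cos, ← Complex.ofReal_sin]; simp
  conv_lhs => rw [h]
  rw [← Complex.exp_nat_mul, Complex.ofReal_cos, Complex.ofReal_sin, ← Complex.exp_mul_I]
  congr 1; push_cast; ring

lemma Li_summable_I (s : ℕ) (hs : 2 ≤ s) (z : ℂ) (hz : ‖z‖ ≤ 1) :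
    Summable (fun n : ℕ => (1 / (n : ℂ) ^ s) * z ^ (id n)) := by
  refine Summable.of_norm_bounded (Real.summable_one_div_nat_pow.2 (show 1 < s by omega)) fun n => ?_
  rw [norm_mul, norm_div, norm_one, norm_pow, norm_pow, Complex.norm_natCast]
  exact mul_le_of_le_one_right (by positivity) (pow_le_one₀ (norm_nonneg _) hz)

lemma Li_I_im (s : ℕ) (hs : 2 ≤ s) : HasSum (fun n : ℕ => 1 / (n : ℝ) ^ s * Real.sin (π * n / 2)) (Li s Complex.I).im := by
  have := Complex.hasSum_im (Li_summable_I s hs Complex.I (by simp)).hasSum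
  unfold Li
  convert! this using 2 with n
  rw [id, I_pow_eq, show (1 / (n : ℂ) ^ s) = ((1 / (n : ℝ) ^ s : ℝ) : ℂ) by push_cast; rfl]
  generalize Real.cos (π * n / 2) = c
  generalize Real.sin (π * n / 2) = d
  generalize 1 / (n : ℝ) ^ s = r
  simp

lemma Li_I_re (s : ℕ) (hs : 2 ≤ s) : HasSum (fun n : ℕ => 1 / (n : ℝ) ^ s * Real.cos (π * n / 2)) (Li s Complex.I).re := by
  have := Complex.hasSum_re (Li_summable_I s hs Complex.I (by simp)).hasSum
  unfold Li
  convert! this using 2 with n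
  rw [id, I_pow_eq, show (1 / (n : ℂ) ^ s) = ((1 / (n : ℝ) ^ s : ℝ) : ℂ) by push_cast; rfl]
  generalize Real.cos (π * n / 2) = c
  generalize Real.sin (π * n / 2) = d
  generalize 1 / (n : ℝ) ^ s = r
  simp

lemma Ti3_one : Ti 3 1 = π ^ 3 / 32 := by
  have := (Li_I_im 3 (by norm_num)).unique hasSum_L_function_mod_four_eval_three
  simpa [Ti] using this

lemma Li2_I_re : (Li 2 Complex.I).re = - π ^ 2 / 48 := by
  have h := hasSum_one_div_nat_pow_mul_cos (k := 1) one_ne_zero (x := 1 / 4) (by constructor <;> norm_num)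
  have h2 := Li_I_re 2 le_rfl
  have h3 := h2.unique (by convert h using 4 with n; ring)
  rw [h3]
  norm_num [Polynomial.bernoulli, Finset.sum_range_succ, bernoulli_eq_bernoulli'_of_ne_one, bernoulli'_two, bernoulli_one, Nat.factorial, Polynomial.map_add]
  ring

lemma Ti2_one : Ti 2 1 = ∑' k : ℕ, (-1 : ℝ) ^ k / (2 * (k : ℝ) + 1) ^ 2 := by
  have h := Li_I_im 2 le_rfl
  have hs : ∀ k : ℕ, Real.sin (π * ((2 * k + 1 : ℕ) : ℝ) / 2) = (-1) ^ k := fun k => by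
    rw [show π * ((2 * k + 1 : ℕ) : ℝ) / 2 = k * π + π / 2 by push_cast; ring, Real.sin_add_pi_div_two,
      Real.cos_nat_mul_pi]
  have hs0 : ∀ k : ℕ, Real.sin (π * ((2 * k : ℕ) : ℝ) / 2) = 0 := fun k => by
    rw [show π * ((2 * k : ℕ) : ℝ) / 2 = k * π by push_cast; ring, Real.sin_nat_mul_pi]
  have e := tsum_even_add_odd (f := fun n : ℕ => 1 / (n : ℝ) ^ 2 * Real.sin (π * n / 2))
    (by simp only [hs0, mul_zero]; exact summable_zero)
    (h.summable.comp_injective odd_inj)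
  rw [h.tsum_eq] at e
  simp only [hs, hs0, mul_zero, tsum_zero, zero_add] at e
  simp only [Ti, Complex.ofReal_one, mul_one]
  rw [← e]
  congr 1; ext k; push_cast; ring

lemma Li3_v : (Li 3 ((1 + Complex.I * ((1 : ℝ) : ℂ))⁻¹)).im
    = - (∑' n : ℕ, ((1 + Complex.I) / 2) ^ (n + 1) / ((n : ℂ) + 1) ^ 3).im := by
  have hv : (1 + Complex.I * ((1 : ℝ) : ℂ))⁻¹ = (starRingEnd ℂ) ((1 + Complex.I) / 2) := by
    apply inv_eq_of_mul_eq_one_right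
    have c2 : (starRingEnd ℂ) 2 = 2 := Complex.conj_ofNat 2
    simp only [map_div₀, map_add, map_one, Complex.conj_I, c2, Complex.ofReal_one, mul_one]
    linear_combination (-1 / 2 : ℂ) * Complex.I_sq
  have hn : ‖(1 + Complex.I) / 2‖ ≤ 1 := by
    have := norm_le_one_aux 1 zero_le_one
    rwa [hv, Complex.norm_conj] at this
  have e : Li 3 ((starRingEnd ℂ) ((1 + Complex.I) / 2)) = (starRingEnd ℂ) (Li 3 ((1 + Complex.I) / 2)) := by
    unfold Li; rw [Complex.conj_tsum]; simp
  rw [hv, e, Complex.conj_im]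
  congr 2
  unfold Li
  rw [(Li_summable_I 3 (by norm_num) _ hn).tsum_eq_zero_add]
  simp only [id]
  simp
  congr 1; ext n; ring

/-- `∑_{n≥1} 4^n/(binom(2n,n)(2n−1)²)
  = 2G − π³/32 + 4 Im Li₃((1+i)/2) − π log²2 / 8`. -/
theorem stmt12 :
    (∑' n : ℕ, (4 : ℝ) ^ (n + 1) /
      ((Nat.choose (2 * (n + 1)) (n + 1) : ℝ) * (2 * ((n : ℝ) + 1) - 1) ^ 2)) =
    2 * (∑' k : ℕ, (-1 : ℝ) ^ k / (2 * (k : ℝ) + 1) ^ 2) - π ^ 3 / 32 +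
      4 * (∑' n : ℕ, ((1 + Complex.I) / 2) ^ (n + 1) / ((n : ℂ) + 1) ^ 3).im -
      π * Real.log 2 ^ 2 / 8 := by
  have hS : (∑' n : ℕ, (4 : ℝ) ^ (n + 1) /
      ((Nat.choose (2 * (n + 1)) (n + 1) : ℝ) * (2 * ((n : ℝ) + 1) - 1) ^ 2)) = PP 1 1 + PP 2 1 := by
    unfold PP
    simp only [one_pow, mul_one]
    rw [← (PP_coef_summable 1 one_ne_zero).tsum_add (PP_coef_summable 2 two_ne_zero)]
    congr 1; ext n
    have p1 : (0 : ℝ) < (Nat.choose (2 * (n + 1)) (n + 1) : ℝ) := by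
      exact_mod_cast Nat.choose_pos (by omega)
    unfold cc
    generalize (Nat.choose (2 * (n + 1)) (n + 1) : ℝ) = x at *
    have h1 : (2 * ((n : ℝ) + 1) - 1) = 2 * n + 1 := by ring
    have h2 : 2 * (n : ℝ) + 1 ≠ 0 := by positivity
    have h3 : (n : ℝ) + 1 ≠ 0 := by positivity
    rw [h1]
    field_simp
    ring
  have h1 := PP1_eq 1 one_pos le_rfl
  rw [show tt 1 = 1 by norm_num [tt]] at h1
  have hm := main_eq
  rw [Li3_one_im, Ti3_one] at hm
  have hL := landen
  have hv : 1 - (1 - Complex.I)⁻¹ = (1 + Complex.I * ((1 : ℝ) : ℂ))⁻¹ := by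
    have a1 : (1 - Complex.I) ≠ 0 := fun h => by simpa using congrArg Complex.re h
    have a2 : (1 + Complex.I) ≠ 0 := fun h => by simpa using congrArg Complex.re h
    simp only [Complex.ofReal_one, mul_one]
    field_simp
    linear_combination (-1 : ℂ) * Complex.I_sq
  rw [hv] at hL
  have hI : (Li 2 Complex.I).im = Ti 2 1 := by simp [Ti]
  have hIre := Li2_I_re
  have h3 := Li3_v
  have hH : (HH 1).im = ((Lg 1) ^ 3 / 3 + (Lg 1) ^ 2 * (Complex.I * (π / 2) - Lg 1)
    - 2 * Lg 1 * Li 2 ((1 + Complex.I * ((1 : ℝ) : ℂ))⁻¹) - 2 * Li 3 ((1 + Complex.I * ((1 : ℝ) : ℂ))⁻¹)).im := by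
    simp [HH]
  rw [hS, h1, ← Ti2_one]
  rw [hH] at hm
  generalize Li 3 ((1 + Complex.I * ((1 : ℝ) : ℂ))⁻¹) = l3 at *
  generalize Li 2 ((1 + Complex.I * ((1 : ℝ) : ℂ))⁻¹) = l2 at *
  generalize Li 2 Complex.I = li at *
  generalize (∑' n : ℕ, ((1 + Complex.I) / 2) ^ (n + 1) / ((n : ℂ) + 1) ^ 3) = q at *
  have hre := congrArg Complex.re hL
  have him := congrArg Complex.im hL
  have La : (Lg 1).re = Real.log 2 / 2 := by rw [Lg_one]; generalize Real.log 2 / 2 = x; generalize π / 4 = y; simp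
  have Lb : (Lg 1).im = π / 4 := by rw [Lg_one]; generalize Real.log 2 / 2 = x; generalize π / 4 = y; simp
  have hpi : ((π : ℂ) / 2) = ((π / 2 : ℝ) : ℂ) := by push_cast; rfl
  have h13 : (1 / 2 : ℂ) = ((1 / 2 : ℝ) : ℂ) := by push_cast; rfl
  have hd3 : (Lg 1) ^ 3 / 3 = ((1 / 3 : ℝ) : ℂ) * (Lg 1 * (Lg 1 * Lg 1)) := by push_cast; ring
  have h22 : (2 : ℂ) = ((2 : ℝ) : ℂ) := by push_cast; rfl
  rw [hd3, hpi, sq (Lg 1)] at hm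
  rw [h13, sq] at hre him
  simp only [Complex.add_re, Complex.add_im, Complex.sub_re, Complex.sub_im, Complex.mul_re, Complex.mul_im,
    Complex.ofReal_re, Complex.ofReal_im, Complex.I_re, Complex.I_im, Complex.conj_re, Complex.conj_im,
    La, Lb, hI, hIre, h3, Complex.zero_re, Complex.zero_im, Complex.re_ofNat, Complex.im_ofNat] at hm hre him
  have r1 : l2.re = π ^ 2 / 48 - (1 / 2) * ((Real.log 2 / 2) ^ 2 - (π / 4) ^ 2) := by
    linear_combination hre
  have r2 : l2.im = - Ti 2 1 + (Real.log 2 / 2) * (π / 4) := by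
    linear_combination him
  rw [r1, r2] at hm
  linear_combination hm
end
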